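/- arXiv:1908.00899 — 2 statements merged into one kernel-verified Lean document; each statement's English description precedes it below -/
import Mathlib

section
/- Let Y' ⊂ P^{n_1} × ... × P^{n_l} and Y'' ⊂ P^{n_{l+1}} × ... × P^{n_k} be irreducible multiprojective varieties. Then the Cartesian product Y' × Y'' is irreducible, its intrinsic dimension is dim(Y') + dim(Y''), and its multidimension satisfies Dim(Y' × Y'') = Dim(Y') × Dim(Y''), i.e., (e',e'') ∈ Dim(Y'×Y'') if and only if e' ∈ Dim(Y') and e'' ∈ Dim(Y''). -/
/-!
Homogeneous coordinates on the product are pairs of homogeneous coordinates, so a linear slice of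
`Y × Z` is the product of a slice of `Y` and a slice of `Z`. A product of sets is finite and
nonempty exactly when both factors are. A pair of conditions on independent parameters holds
generically exactly when each of them does (`generic_prod`), and this gives the claim about
multidimensions (`mem_mDim_prodSet`).

For irreducibility, let `Y × Z` be covered by algebraic sets `A` and `B`. Each fibre `Y × {z}` is
irreducible, so it lies in `A` or in `B`. The points `z` with `Y × {z} ⊆ A` form an algebraic set,
likewise for `B`, and irreducibility of `Z` finishes the argument (`isIrredVariety_prodSet`).

The dimension is the supremum of the total degrees of the multidimension. It is additive once both
multidimensions are known to be nonempty, since an empty supremum would be `0`. The main work is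
therefore to show that a nonempty algebraic set `X` has a nonempty multidimension
(`mDim_nonempty`). Take `e` maximal among the types for which every slice meets `X`; it exists
because `n i + 1` coordinate hyperplanes of the `i`-th factor have no common point. For each `i`,
some slice of type `e + e_i` misses `X`. By `elimination`, there is a polynomial in the coefficients
of slices of this type that vanishes on every slice meeting `X`, but not identically. It comes from
the Nullstellensatz: if a slice misses `X`, then in some multidegree every monomial is a combination
of the forms of the slice modulo the ideal of `X`, and a determinant as in the proof of Nakayama's
lemma detects whether this persists for other slices. Now fix a generic slice `L` of type `e`. As a
polynomial in the additional form on the `i`-th factor, the eliminant is not zero, and it vanishes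
on all hyperplanes through the `i`-th coordinate of a point of `X` on `L`. By unique factorization,
a hypersurface contains only finitely many hyperplanes, so there are finitely many such `i`-th
coordinates (`finite_proj`). This holds for all `i`, so the slice of `X` by `L` is finite.
-/

open scoped BigOperators

namespace MultiProj

variable {ι : Type*} [Fintype ι] [DecidableEq ι]

/-- Multiprojective space: a product of complex projective spaces `ℙ^{n i}`. -/
abbrev PStack (n : ι → ℕ) := (i : ι) → Projectivization ℂ (Fin (n i + 1) → ℂ)

/-- A linear form (given by its coefficient vector) vanishes at a point of the
projectivization of a coordinate space. -/
def PLinVanish {κ : Type*} [Fintype κ] (c : κ → ℂ)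
    (p : Projectivization ℂ (κ → ℂ)) : Prop :=
  ∀ (v : κ → ℂ) (hv : v ≠ 0), Projectivization.mk ℂ v hv = p → ∑ a, c a * v a = 0

/-- A polynomial in the multihomogeneous coordinates vanishes at a point of the
multiprojective space, i.e. at every system of homogeneous representatives. -/
def PolyVanish {n : ι → ℕ} (f : MvPolynomial ((i : ι) × Fin (n i + 1)) ℂ)
    (x : PStack n) : Prop :=
  ∀ v : (i : ι) → Fin (n i + 1) → ℂ,
    (∀ i, ∃ hv : v i ≠ 0, Projectivization.mk ℂ (v i) hv = x i) →
    MvPolynomial.eval (fun p => v p.1 p.2) f = 0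

/-- Algebraic subsets of multiprojective space. -/
def IsAlgebraicSet {n : ι → ℕ} (X : Set (PStack n)) : Prop :=
  ∃ F : Set (MvPolynomial ((i : ι) × Fin (n i + 1)) ℂ),
    X = {x | ∀ f ∈ F, PolyVanish f x}

/-- Irreducible multiprojective varieties: nonempty algebraic sets that are not
contained in the union of two algebraic sets without being contained in one. -/
def IsIrredVariety {n : ι → ℕ} (X : Set (PStack n)) : Prop :=
  IsAlgebraicSet X ∧ X.Nonempty ∧
    ∀ A B : Set (PStack n), IsAlgebraicSet A → IsAlgebraicSet B →
      X ⊆ A ∪ B → (X ⊆ A ∨ X ⊆ B)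

/-- An irreducible component of a multiprojective variety. -/
def IsComponentOf {n : ι → ℕ} (Y X : Set (PStack n)) : Prop :=
  IsIrredVariety Y ∧ Y ⊆ X ∧
    ∀ Y' : Set (PStack n), IsIrredVariety Y' → Y ⊆ Y' → Y' ⊆ X → Y' = Y

/-- Parameter space for a multilinear slice of type `e`: `e i` linear forms in
the variables of the `i`-th factor. -/
abbrev SliceParams (n : ι → ℕ) (e : ι → ℕ) :=
  (i : ι) → Fin (e i) → (Fin (n i + 1) → ℂ)

/-- The common zero set in multiprojective space of a multilinear slice. -/
def SliceZeros {n : ι → ℕ} {e : ι → ℕ} (L : SliceParams n e) : Set (PStack n) :=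
  {x | ∀ (i : ι) (j : Fin (e i)), PLinVanish (L i j) (x i)}

/-- A property holds generically (on a dense open set) of a parameter. -/
def Generic {α : Type*} [TopologicalSpace α] (P : α → Prop) : Prop :=
  ∃ U : Set α, IsOpen U ∧ Dense U ∧ ∀ a ∈ U, P a

/-- The multidimension `Dim(X)`: the set of vectors `e` such that a general
multilinear slice of type `e` meets `X` in finitely many, and at least one, points. -/
def MDim {n : ι → ℕ} (X : Set (PStack n)) : Set (ι → ℕ) :=
  {e | (∀ i, e i ≤ n i) ∧
    Generic (fun L : SliceParams n e =>
      (X ∩ SliceZeros L).Finite ∧ (X ∩ SliceZeros L).Nonempty)}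

/-- `Deg_X(e) = d`: a general multilinear slice of type `e` meets `X` in exactly
`d` points. -/
def DegIs {n : ι → ℕ} (X : Set (PStack n)) (e : ι → ℕ) (d : ℕ) : Prop :=
  Generic (fun L : SliceParams n e =>
    (X ∩ SliceZeros L).Finite ∧ (X ∩ SliceZeros L).ncard = d)

/-- The intrinsic dimension of a multiprojective variety, read off as the common
total degree of the vectors in its multidimension. -/
noncomputable def dimOf {n : ι → ℕ} (X : Set (PStack n)) : ℕ :=
  sSup {m | ∃ e ∈ MDim X, ∑ i, e i = m}

/-- Projection of the multiprojective space onto the factors indexed by `I`. -/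
def resMap {n : ι → ℕ} (I : Finset ι) (x : PStack n) :
    PStack (fun i : {j // j ∈ I} => n i.1) :=
  fun i => x i.1

/-- `dim π_I(X)`: the dimension of the projection of `X` onto the factors
indexed by `I`. -/
noncomputable def dimProj {n : ι → ℕ} (I : Finset ι) (X : Set (PStack n)) : ℕ :=
  dimOf (resMap I '' X)

/-- An equidimensional multiprojective variety: all irreducible components have
the same multidimension. -/
def Equidimensional {n : ι → ℕ} (X : Set (PStack n)) : Prop :=
  IsAlgebraicSet X ∧ X.Nonempty ∧
    ∀ Y Y' : Set (PStack n), IsComponentOf Y X → IsComponentOf Y' X →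
      MDim Y = MDim Y'

/-- The set of lattice points of a polymatroid polytope inside the box `[n]`,
cut out by a submodular, monotone rank function. -/
def IsPolymatroidSet (n : ι → ℕ) (P : Set (ι → ℕ)) : Prop :=
  ∃ r : Finset ι → ℕ,
    (∀ A B : Finset ι, r (A ∪ B) + r (A ∩ B) ≤ r A + r B) ∧
    (∀ A B : Finset ι, A ⊆ B → r A ≤ r B) ∧
    P = {e | (∀ i, e i ≤ n i) ∧ (∑ i, e i = r Finset.univ) ∧
          ∀ S : Finset ι, ∑ i ∈ S, e i ≤ r S}

section Product

variable {ι₁ ι₂ : Type*} [Fintype ι₁] [DecidableEq ι₁] [Fintype ι₂] [DecidableEq ι₂]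

/-- Combine points of two multiprojective spaces into a point of the product
multiprojective space, indexed by the disjoint union of the index sets. -/
def combine {n₁ : ι₁ → ℕ} {n₂ : ι₂ → ℕ} (y : PStack n₁) (z : PStack n₂) :
    PStack (Sum.elim n₁ n₂) := fun i =>
  match i with
  | Sum.inl a => y a
  | Sum.inr b => z b

/-- The Cartesian product of multiprojective varieties in disjoint factors. -/
def prodSet {n₁ : ι₁ → ℕ} {n₂ : ι₂ → ℕ} (Y : Set (PStack n₁)) (Z : Set (PStack n₂)) :
    Set (PStack (Sum.elim n₁ n₂)) :=
  {x | ∃ y ∈ Y, ∃ z ∈ Z, x = combine y z}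

/-- Projection of the product multiprojective space onto the first group of factors. -/
def projL {n₁ : ι₁ → ℕ} {n₂ : ι₂ → ℕ} (x : PStack (Sum.elim n₁ n₂)) : PStack n₁ :=
  fun a => x (Sum.inl a)

/-- Projection of the product multiprojective space onto the second group of factors. -/
def projR {n₁ : ι₁ → ℕ} {n₂ : ι₂ → ℕ} (x : PStack (Sum.elim n₁ n₂)) : PStack n₂ :=
  fun b => x (Sum.inr b)

end Product

section Segre

/-- Degree `δ` of a subset `S` of the projective space `ℙ(ℂ^κ)` of dimension `d`:
a general collection of `d` hyperplanes meets `S` in exactly `δ` points. -/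
def ProjDegIs {κ : Type*} [Fintype κ] (S : Set (Projectivization ℂ (κ → ℂ)))
    (d : ℕ) (δ : ℕ) : Prop :=
  Generic (fun c : Fin d → κ → ℂ =>
    (S ∩ {p | ∀ j, PLinVanish (c j) p}).Finite ∧
    (S ∩ {p | ∀ j, PLinVanish (c j) p}).ncard = δ)

/-- `σ` is a Segre embedding: on homogeneous representatives it is given by the
tensor (outer) product of the coordinate vectors of the factors. -/
def IsSegreMap (n : ι → ℕ)
    (σ : PStack n → Projectivization ℂ (((i : ι) → Fin (n i + 1)) → ℂ)) : Prop :=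
  ∀ (x : PStack n) (v : (i : ι) → Fin (n i + 1) → ℂ),
    (∀ i, ∃ hv : v i ≠ 0, Projectivization.mk ℂ (v i) hv = x i) →
    ∃ h : (fun a : (i : ι) → Fin (n i + 1) => ∏ i, v i (a i)) ≠ 0,
      Projectivization.mk ℂ (fun a : (i : ι) → Fin (n i + 1) => ∏ i, v i (a i)) h = σ x

end Segre

end MultiProj

open MultiProj

/-! ### Evaluation and homogeneous coordinates -/

theorem eval_subst {σ τ : Type*} (t : τ → ℂ) (φ : σ → MvPolynomial τ ℂ) (f : MvPolynomial σ ℂ) :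
    MvPolynomial.eval t (MvPolynomial.aeval φ f) =
      MvPolynomial.eval (fun p => MvPolynomial.eval t (φ p)) f := by
  induction f using MvPolynomial.induction_on with
  | C a => simp
  | add p q hp hq => rw [map_add, map_add, hp, hq, map_add]
  | mul_X p i hp => rw [map_mul, map_mul, hp, map_mul, MvPolynomial.aeval_X, MvPolynomial.eval_X]

theorem aeval_eq {σ : Type*} (t : σ → ℂ) (f : MvPolynomial σ ℂ) :
    MvPolynomial.aeval t f = MvPolynomial.eval t f := by
  rw [← MvPolynomial.coe_aeval_eq_eval]
  rfl

theorem mk_eq_of_smul {N : ℕ} {v w : Fin N → ℂ} (t : ℂ) (h : w = t • v) (hv : v ≠ 0) (hw : w ≠ 0) :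
    Projectivization.mk ℂ w hw = Projectivization.mk ℂ v hv :=
  (Projectivization.mk_eq_mk_iff' ℂ w v hw hv).2 ⟨t, h.symm⟩

theorem pLinVanish_mk {N : ℕ} {c v : Fin N → ℂ} (hv : v ≠ 0) :
    PLinVanish c (Projectivization.mk ℂ v hv) ↔ ∑ a, c a * v a = 0 := by
  refine ⟨fun h => h v hv rfl, fun h w hw e => ?_⟩
  obtain ⟨t, rfl⟩ := (Projectivization.mk_eq_mk_iff' ℂ w v hw hv).1 e
  have : ∑ a, c a * (t • v) a = t * ∑ a, c a * v a := by
    rw [Finset.mul_sum]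
    exact Finset.sum_congr rfl fun a _ => by simp; ring
  rw [this, h, mul_zero]

/-- `v` is a system of homogeneous coordinates of the point `x`. -/
def IsRep {ι : Type*} {n : ι → ℕ} (v : (i : ι) → Fin (n i + 1) → ℂ) (x : PStack n) : Prop :=
  ∀ i, ∃ hv : v i ≠ 0, Projectivization.mk ℂ (v i) hv = x i

theorem exists_isRep {ι : Type*} {n : ι → ℕ} (x : PStack n) : ∃ v, IsRep v x :=
  ⟨fun i => (x i).rep, fun i => ⟨(x i).rep_nonzero, (x i).mk_rep⟩⟩

theorem IsRep.smul {ι : Type*} {n : ι → ℕ} {v : (i : ι) → Fin (n i + 1) → ℂ} {x : PStack n}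
    (h : IsRep v x) {t : ι → ℂ} (ht : ∀ i, t i ≠ 0) : IsRep (fun i => t i • v i) x := by
  intro i
  obtain ⟨hv, e⟩ := h i
  have hw : t i • v i ≠ 0 := smul_ne_zero (ht i) hv
  exact ⟨hw, (mk_eq_of_smul (t i) rfl hv hw).trans e⟩

theorem IsRep.pLinVanish {ι : Type*} {n : ι → ℕ} {v : (i : ι) → Fin (n i + 1) → ℂ} {x : PStack n}
    (h : IsRep v x) (i : ι) (c : Fin (n i + 1) → ℂ) :
    PLinVanish c (x i) ↔ ∑ a, c a * v i a = 0 := by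
  obtain ⟨hv, e⟩ := h i
  rw [← e, pLinVanish_mk]

theorem IsRep.exists_smul {ι : Type*} {n : ι → ℕ} {v w : (i : ι) → Fin (n i + 1) → ℂ}
    {x : PStack n} (h : IsRep v x) (hw : IsRep w x) :
    ∃ t : ι → ℂ, (∀ i, t i ≠ 0) ∧ w = fun i => t i • v i := by
  have : ∀ i, ∃ t : ℂ, t ≠ 0 ∧ w i = t • v i := by
    intro i
    obtain ⟨hv, e⟩ := h i
    obtain ⟨hw, e'⟩ := hw i
    obtain ⟨t, ht⟩ := (Projectivization.mk_eq_mk_iff ℂ _ _ hw hv).1 (e'.trans e.symm)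
    exact ⟨t, t.ne_zero, ht.symm⟩
  choose t ht h using this
  exact ⟨t, ht, funext h⟩

/-! ### Nullstellensatz and elimination in multiprojective space -/

section Elimination

variable {ι : Type*} {n : ι → ℕ}

/-- The multidegree of a monomial in the multihomogeneous coordinates. -/
noncomputable def mdeg [Fintype ι] (m : ((i : ι) × Fin (n i + 1)) →₀ ℕ) : ι →₀ ℕ :=
  Finsupp.equivFunOnFinite.symm fun i => ∑ k, m ⟨i, k⟩

/-- The substitution `x_{i,k} ↦ v_{i,k} t_i`. The coefficient of `t^d` in the image of `f` is the
value at `v` of the part of `f` of multidegree `d`. -/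
noncomputable def scaleHom (v : (i : ι) → Fin (n i + 1) → ℂ) :
    MvPolynomial ((i : ι) × Fin (n i + 1)) ℂ →ₐ[ℂ] MvPolynomial ι ℂ :=
  MvPolynomial.aeval fun p => MvPolynomial.C (v p.1 p.2) * MvPolynomial.X p.1

/-- The value at `v` of the monomial with exponent vector `m`. -/
noncomputable def monVal [Fintype ι] (v : (i : ι) → Fin (n i + 1) → ℂ)
    (m : ((i : ι) × Fin (n i + 1)) →₀ ℕ) : ℂ :=
  ∏ p, v p.1 p.2 ^ m p

theorem scaleHom_monomial [Fintype ι] (v : (i : ι) → Fin (n i + 1) → ℂ)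
    (m : ((i : ι) × Fin (n i + 1)) →₀ ℕ) (c : ℂ) :
    scaleHom v (MvPolynomial.monomial m c) =
      MvPolynomial.monomial (mdeg m) (c * monVal v m) := by
  rw [scaleHom, MvPolynomial.aeval_monomial, Finsupp.prod_fintype _ _ (by simp),
    MvPolynomial.monomial_eq, Finsupp.prod_fintype _ _ (by simp)]
  simp only [mul_pow, Finset.prod_mul_distrib, MvPolynomial.algebraMap_eq, mdeg, monVal, map_mul,
    map_prod, map_pow, Finsupp.equivFunOnFinite_symm_apply_apply]
  rw [mul_assoc]
  congr 2
  rw [Fintype.prod_sigma]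
  simp only [Finset.prod_pow_eq_pow_sum]

theorem coeff_scaleHom [Fintype ι] (v : (i : ι) → Fin (n i + 1) → ℂ)
    (f : MvPolynomial ((i : ι) × Fin (n i + 1)) ℂ) (d : ι →₀ ℕ)
    (T : Finset (((i : ι) × Fin (n i + 1)) →₀ ℕ)) (hT : ∀ m, m ∈ T ↔ mdeg m = d) :
    (scaleHom v f).coeff d = ∑ m ∈ T, f.coeff m * monVal v m := by
  classical
  conv_lhs => rw [f.as_sum, map_sum, MvPolynomial.coeff_sum]
  simp only [scaleHom_monomial, MvPolynomial.coeff_monomial]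
  rw [← Finset.sum_filter]
  refine Finset.sum_subset_zero_on_sdiff ?_ ?_ (fun _ _ => rfl)
  · intro m hm
    exact (hT m).2 (Finset.mem_filter.1 hm).2
  · intro m hm
    rw [Finset.mem_sdiff, Finset.mem_filter, hT] at hm
    have : m ∉ f.support := fun h => hm.2 ⟨h, hm.1⟩
    rw [MvPolynomial.notMem_support_iff.1 this, zero_mul]

theorem eval_scaleHom (v : (i : ι) → Fin (n i + 1) → ℂ)
    (f : MvPolynomial ((i : ι) × Fin (n i + 1)) ℂ) (t : ι → ℂ) :
    MvPolynomial.eval t (scaleHom v f) =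
      MvPolynomial.eval (fun p => (t p.1 • v p.1) p.2) f := by
  rw [scaleHom, eval_subst]
  simp [mul_comm]

/-- A polynomial vanishing at a point of multiprojective space has all its multihomogeneous parts
vanishing there: as a polynomial in the scaling factors it is zero on the torus. -/
theorem scaleHom_eq_zero [Fintype ι] {v : (i : ι) → Fin (n i + 1) → ℂ} {x : PStack n} (hv : IsRep v x)
    {f : MvPolynomial ((i : ι) × Fin (n i + 1)) ℂ} (hf : PolyVanish f x) :
    scaleHom v f = 0 := by
  have h : (∏ i, MvPolynomial.X i) * scaleHom v f = 0 := by
    refine MvPolynomial.funext fun t => ?_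
    rw [map_mul, map_prod, map_zero, eval_scaleHom]
    by_cases ht : ∀ i, t i ≠ 0
    · rw [hf _ (hv.smul ht), mul_zero]
    · push Not at ht
      obtain ⟨i, hi⟩ := ht
      rw [Finset.prod_eq_zero (Finset.mem_univ i) (by simpa using hi), zero_mul]
  refine (mul_eq_zero.1 h).resolve_left ?_
  exact Finset.prod_ne_zero_iff.2 fun i _ => MvPolynomial.X_ne_zero i

/-- The ideal of all polynomials vanishing on `X`, not only the multihomogeneous ones: a member is
zero at every system of homogeneous coordinates of every point of `X`. -/
def idealOf (X : Set (PStack n)) : Ideal (MvPolynomial ((i : ι) × Fin (n i + 1)) ℂ) where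
  carrier := {f | ∀ x ∈ X, PolyVanish f x}
  zero_mem' := fun x _ v _ => map_zero _
  add_mem' := fun {f g} hf hg x hx v hv => by rw [map_add, hf x hx v hv, hg x hx v hv, add_zero]
  smul_mem' := fun c f hf x hx v hv => by rw [smul_eq_mul, map_mul, hf x hx v hv, mul_zero]

theorem mem_idealOf {X : Set (PStack n)} {f : MvPolynomial ((i : ι) × Fin (n i + 1)) ℂ} :
    f ∈ idealOf X ↔ ∀ x ∈ X, PolyVanish f x :=
  Iff.rfl

/-- Composing a polynomial with a scaling of the homogeneous coordinates, factor by factor, gives a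
polynomial. -/
theorem exists_scaled (t : ι → ℂ) (f : MvPolynomial ((i : ι) × Fin (n i + 1)) ℂ) :
    ∃ ft : MvPolynomial ((i : ι) × Fin (n i + 1)) ℂ, ∀ u : (i : ι) → Fin (n i + 1) → ℂ,
      MvPolynomial.eval (fun p => u p.1 p.2) ft =
        MvPolynomial.eval (fun p => (t p.1 • u p.1) p.2) f := by
  refine ⟨MvPolynomial.aeval (fun p => MvPolynomial.C (t p.1) * MvPolynomial.X p) f,
    fun u => ?_⟩
  rw [eval_subst]
  simp

/-- Away from the irrelevant locus, the zeros of the ideal of an algebraic set are the points of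
its multicone. -/
theorem mem_of_idealOf {X : Set (PStack n)} (hX : IsAlgebraicSet X)
    {v : (i : ι) → Fin (n i + 1) → ℂ} {x : PStack n} (hv : IsRep v x)
    (h : ∀ f ∈ idealOf X, MvPolynomial.eval (fun p => v p.1 p.2) f = 0) : x ∈ X := by
  obtain ⟨F, hX⟩ := hX
  rw [hX, Set.mem_ofPred_eq]
  intro f hf w hw
  obtain ⟨t, ht, rfl⟩ := hv.exists_smul hw
  -- `f` composed with the scaling by `t` still vanishes on the whole set
  obtain ⟨ft, key⟩ := exists_scaled t f
  have hft : ft ∈ idealOf X := by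
    refine mem_idealOf.2 fun y hy u hu => ?_
    rw [hX, Set.mem_ofPred_eq] at hy
    have hf' : PolyVanish f y := hy f hf
    have hu' : IsRep u y := hu
    have h2 := hf' (fun i => t i • u i) (hu'.smul ht)
    exact (key u).trans h2
  exact (key v).symm.trans (h ft hft)

/-- The linear form on the `i`-th factor with coefficient vector `c`. -/
noncomputable def linPoly (i : ι) (c : Fin (n i + 1) → ℂ) :
    MvPolynomial ((i : ι) × Fin (n i + 1)) ℂ :=
  ∑ k, MvPolynomial.C (c k) * MvPolynomial.X ⟨i, k⟩

theorem scaleHom_linPoly (v : (i : ι) → Fin (n i + 1) → ℂ) (i : ι) (c : Fin (n i + 1) → ℂ) :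
    scaleHom v (linPoly i c) = MvPolynomial.C (∑ k, c k * v i k) * MvPolynomial.X i := by
  simp [scaleHom, linPoly, Finset.sum_mul, map_sum, mul_assoc, MvPolynomial.algebraMap_eq]

/-- Nullstellensatz in multiprojective form: if an algebraic set misses a linear slice, then all
monomials of some fixed multidegree lie in the ideal generated by the set and the slice. -/
theorem exists_mdeg_mem [Fintype ι] {X : Set (PStack n)} (hX : IsAlgebraicSet X)
    {J : Type*} [Fintype J] (τ : J → ι) (c : (j : J) → Fin (n (τ j) + 1) → ℂ)
    (hc : ∀ x ∈ X, ¬ ∀ j, PLinVanish (c j) (x (τ j))) :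
    ∃ d : ι →₀ ℕ, ∀ m : ((i : ι) × Fin (n i + 1)) →₀ ℕ, mdeg m = d →
      MvPolynomial.monomial m (1 : ℂ) ∈
        idealOf X ⊔ Ideal.span (Set.range fun j => linPoly (τ j) (c j)) := by
  classical
  set K := idealOf X ⊔ Ideal.span (Set.range fun j => linPoly (τ j) (c j)) with hK
  -- the product of one coordinate from each factor is zero on the zero locus of `K`, as a zero
  -- with all factors nonzero would be a point of `X` on the slice
  have hrad : ∀ a : (i : ι) → Fin (n i + 1), ∃ N : ℕ,
      (∏ i, MvPolynomial.X (R := ℂ) (⟨i, a i⟩ : (i : ι) × Fin (n i + 1))) ^ N ∈ K := by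
    intro a
    change _ ∈ K.radical
    rw [← MvPolynomial.vanishingIdeal_zeroLocus_eq_radical (K := ℂ)]
    intro w hw
    rw [MvPolynomial.mem_zeroLocus_iff] at hw
    by_contra hne
    rw [map_prod] at hne
    simp only [MvPolynomial.aeval_X] at hne
    rw [← ne_eq, Finset.prod_ne_zero_iff] at hne
    let v : (i : ι) → Fin (n i + 1) → ℂ := fun i k => w ⟨i, k⟩
    have hv : ∀ i, v i ≠ 0 := fun i h => hne i (Finset.mem_univ i) (congrFun h (a i))
    let x : PStack n := fun i => Projectivization.mk ℂ (v i) (hv i)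
    have hx : IsRep v x := fun i => ⟨hv i, rfl⟩
    have hmem : x ∈ X := by
      refine mem_of_idealOf hX hx fun f hf => ?_
      have := hw f (hK ▸ Ideal.mem_sup_left hf)
      rwa [aeval_eq] at this
    refine hc x hmem fun j => ?_
    rw [hx.pLinVanish]
    have := hw (linPoly (τ j) (c j)) (hK ▸ Ideal.mem_sup_right (Ideal.subset_span ⟨j, rfl⟩))
    simpa [linPoly, v] using this
  choose N hN using hrad
  let N' := Finset.univ.sup N
  refine ⟨Finsupp.equivFunOnFinite.symm fun i => (n i + 1) * N', fun m hm => ?_⟩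
  -- by the pigeonhole principle some coordinate of each factor has exponent at least `N'` in `m`
  have hbig : ∀ i, ∃ k, N' ≤ m ⟨i, k⟩ := by
    intro i
    have h1 : ∑ k, m ⟨i, k⟩ = (n i + 1) * N' := by
      have := DFunLike.congr_fun hm i
      simpa [mdeg] using this
    obtain ⟨k, -, hk⟩ := Finset.exists_le_of_sum_le (s := (Finset.univ : Finset (Fin (n i + 1))))
      (f := fun _ => N') (g := fun k => m ⟨i, k⟩) Finset.univ_nonempty (by simp [h1])
    exact ⟨k, hk⟩
  choose a ha using hbig
  refine Ideal.mem_of_dvd _ ?_ (hN a)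
  have : (∏ i, MvPolynomial.X (R := ℂ) (⟨i, a i⟩ : (i : ι) × Fin (n i + 1))) ^ N a =
      MvPolynomial.monomial (∑ i, Finsupp.single ⟨i, a i⟩ (N a)) 1 := by
    rw [← Finset.prod_pow, MvPolynomial.monomial_sum_one]
    simp [MvPolynomial.X_pow_eq_monomial]
  rw [this, MvPolynomial.monomial_dvd_monomial]
  refine ⟨Or.inr ?_, one_dvd _⟩
  rintro ⟨i, k⟩
  rw [Finsupp.finsetSum_apply]
  simp only [Finsupp.single_apply]
  by_cases hk : a i = k
  · subst hk
    rw [Finset.sum_eq_single i]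
    · simp only [if_true]
      exact (Finset.le_sup (Finset.mem_univ a)).trans (ha i)
    · intro b _ hb
      rw [if_neg]
      intro h
      exact hb (congrArg Sigma.fst h)
    · simp
  · rw [Finset.sum_eq_zero]
    · exact Nat.zero_le _
    · intro b _
      rw [if_neg]
      intro h
      obtain ⟨rfl, h⟩ := Sigma.mk.inj_iff.1 h
      exact hk (eq_of_heq h)

/-- Elimination: if an algebraic set misses one linear slice, then there is a polynomial in the
coefficients of the slice that vanishes on every slice meeting the set, but not on the given one.
The polynomial is a determinant `det (1 - A)`. Here `A` is zero at the given slice, and at a slice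
through a point of the set it fixes the vector of monomials of that point, which is not zero. -/
theorem elimination [Fintype ι] {X : Set (PStack n)} (hX : IsAlgebraicSet X)
    {J : Type*} [Fintype J] (τ : J → ι) (c₀ : (j : J) → Fin (n (τ j) + 1) → ℂ)
    (hc : ∀ x ∈ X, ¬ ∀ j, PLinVanish (c₀ j) (x (τ j))) :
    ∃ g : MvPolynomial ((j : J) × Fin (n (τ j) + 1)) ℂ,
      MvPolynomial.eval (fun p => c₀ p.1 p.2) g ≠ 0 ∧
      ∀ c : (j : J) → Fin (n (τ j) + 1) → ℂ, ∀ x ∈ X, (∀ j, PLinVanish (c j) (x (τ j))) →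
        MvPolynomial.eval (fun p => c p.1 p.2) g = 0 := by
  classical
  obtain ⟨d, hd⟩ := exists_mdeg_mem hX τ c₀ hc
  have hfin : {m : ((i : ι) × Fin (n i + 1)) →₀ ℕ | mdeg m = d}.Finite := by
    refine (Set.finite_Iic (Finsupp.equivFunOnFinite.symm fun p => d p.1)).subset ?_
    rintro m rfl ⟨i, k⟩
    simp only [mdeg, Finsupp.equivFunOnFinite_symm_apply_apply]
    exact Finset.single_le_sum (f := fun k => m ⟨i, k⟩) (fun _ _ => Nat.zero_le _)
      (Finset.mem_univ k)
  let T := hfin.toFinset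
  have hT : ∀ m, m ∈ T ↔ mdeg m = d := fun m => by simp [T]
  have hdec : ∀ m : T, ∃ h : J → MvPolynomial ((i : ι) × Fin (n i + 1)) ℂ,
      MvPolynomial.monomial m.1 (1 : ℂ) - ∑ j, h j * linPoly (τ j) (c₀ j) ∈ idealOf X := by
    intro m
    obtain ⟨f, hf, s, hs, e⟩ := Submodule.mem_sup.1 (hd m.1 ((hT _).1 m.2))
    obtain ⟨h, rfl⟩ := Ideal.mem_span_range_iff_exists_fun.1 hs
    refine ⟨h, ?_⟩
    rw [← e, add_sub_cancel_right]
    exact hf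
  choose h hh using hdec
  -- at the slice `c`, row `m` of `A` holds the coefficients of the remainder of the monomial `m`
  -- modulo `idealOf X` and the forms `c j`
  let A : Matrix T T (MvPolynomial ((j : J) × Fin (n (τ j) + 1)) ℂ) := fun m m' =>
    ∑ j, ∑ k, (MvPolynomial.C (c₀ j k) - MvPolynomial.X ⟨j, k⟩) *
      MvPolynomial.C (MvPolynomial.coeff m'.1 (h m j * MvPolynomial.X ⟨τ j, k⟩))
  have hA : ∀ (c : (j : J) → Fin (n (τ j) + 1) → ℂ) (m m' : T),
      MvPolynomial.eval (fun p => c p.1 p.2) (A m m') =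
        MvPolynomial.coeff m'.1 (∑ j, h m j * linPoly (τ j) (c₀ j - c j)) := by
    intro c m m'
    simp only [A, map_sum, map_mul, map_sub, MvPolynomial.eval_C, MvPolynomial.eval_X,
      MvPolynomial.coeff_sum, linPoly, Finset.mul_sum]
    refine Finset.sum_congr rfl fun j _ => Finset.sum_congr rfl fun k _ => ?_
    rw [mul_left_comm, MvPolynomial.coeff_C_mul]
    rfl
  refine ⟨(1 - A).det, ?_, ?_⟩
  · rw [RingHom.map_det]
    have : (MvPolynomial.eval fun p : (j : J) × Fin (n (τ j) + 1) => c₀ p.1 p.2).mapMatrix (1 - A)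
        = 1 := by
      rw [map_sub, map_one, sub_eq_self]
      ext m m'
      rw [RingHom.mapMatrix_apply, Matrix.map_apply, hA]
      simp [linPoly]
    rw [this, Matrix.det_one]
    exact one_ne_zero
  · intro c x hx hcx
    obtain ⟨v, hv⟩ := exists_isRep x
    by_contra hne
    rw [RingHom.map_det] at hne
    -- otherwise `1 - A` is invertible at `c`, and kills the vector of monomial values
    have h0 : (fun m : T => monVal v m.1) = 0 := by
      refine Matrix.eq_zero_of_mulVec_eq_zero hne ?_
      rw [map_sub, map_one, Matrix.sub_mulVec, Matrix.one_mulVec, sub_eq_zero]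
      funext m
      have e1 := scaleHom_eq_zero hv (hh m x hx)
      have e2 : ∑ j, scaleHom v (h m j * linPoly (τ j) (c j)) = 0 := by
        refine Finset.sum_eq_zero fun j _ => ?_
        rw [map_mul, scaleHom_linPoly, (hv.pLinVanish _ _).1 (hcx j)]
        simp
      have e3 : scaleHom v (MvPolynomial.monomial m.1 1) =
          scaleHom v (∑ j, h m j * linPoly (τ j) (c₀ j - c j)) := by
        rw [map_sub, sub_eq_zero] at e1
        rw [e1, map_sum, map_sum, ← sub_zero (∑ j, _), ← e2, ← Finset.sum_sub_distrib]
        refine Finset.sum_congr rfl fun j _ => ?_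
        rw [← map_sub, ← mul_sub]
        congr 2
        simp [linPoly, sub_mul, Finset.sum_sub_distrib]
      have e4 := congrArg (MvPolynomial.coeff d) e3
      rw [scaleHom_monomial, MvPolynomial.coeff_monomial, if_pos ((hT _).1 m.2), one_mul,
        coeff_scaleHom v _ d T hT] at e4
      rw [e4, Matrix.mulVec, dotProduct, ← Finset.sum_coe_sort T]
      refine Finset.sum_congr rfl fun m' _ => ?_
      rw [RingHom.mapMatrix_apply, Matrix.map_apply, hA]
    -- some monomial of multidegree `d` does not vanish at `v`
    have hne' : ∀ i, ∃ k, v i k ≠ 0 := fun i => Function.ne_iff.1 (hv i).1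
    choose a ha using hne'
    let m : ((i : ι) × Fin (n i + 1)) →₀ ℕ :=
      Finsupp.equivFunOnFinite.symm fun p => if p.2 = a p.1 then d p.1 else 0
    have hm : m ∈ T := by
      rw [hT]
      ext i
      simp [mdeg, m]
    have := congrFun h0 ⟨m, hm⟩
    refine absurd this ?_
    refine Finset.prod_ne_zero_iff.2 ?_
    rintro ⟨i, k⟩ _
    by_cases hk : k = a i
    · subst hk
      exact pow_ne_zero _ (ha i)
    · simp [m, hk]

end Elimination

/-! ### Nonempty multidimension -/

/-- A nonzero polynomial on the dual space vanishes on only finitely many hyperplanes: each of them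
is the zero set of a prime factor of the polynomial. -/
theorem finite_hyperplanes {N : ℕ} {q : MvPolynomial (Fin N) ℂ} (hq : q ≠ 0) :
    {p : Projectivization ℂ (Fin N → ℂ) |
      ∀ c : Fin N → ℂ, PLinVanish c p → MvPolynomial.eval c q = 0}.Finite := by
  let ℓ : Projectivization ℂ (Fin N → ℂ) → MvPolynomial (Fin N) ℂ := fun p =>
    MvPolynomial.sumSMulX (Finsupp.equivFunOnFinite.symm p.rep)
  have hcoeff : ∀ p k, (ℓ p).coeff (Finsupp.single k 1) = p.rep k := fun p k => by
    simp [ℓ, MvPolynomial.coeff_sumSMulX]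
  have heval : ∀ p c, MvPolynomial.eval c (ℓ p) = ∑ k, c k * p.rep k := fun p c => by
    simp only [ℓ, MvPolynomial.sumSMulX, Finsupp.linearCombination_apply]
    rw [Finsupp.sum_fintype _ _ (by simp), map_sum]
    refine Finset.sum_congr rfl fun k _ => ?_
    simp [MvPolynomial.smul_eval, mul_comm]
  have hprime : ∀ p, Prime (ℓ p) := fun p => by
    obtain ⟨k, hk⟩ := Function.ne_iff.1 p.rep_nonzero
    refine (MvPolynomial.irreducible_sumSMulX _ ⟨k, by simpa using hk⟩ fun r hr => ?_).prime
    refine IsUnit.mk0 r ?_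
    rintro rfl
    exact hk (zero_dvd_iff.1 (hr k))
  obtain ⟨S, hS, hSq⟩ := UniqueFactorizationMonoid.exists_prime_factors q hq
  -- associated linear forms define the same point
  refine Set.Finite.subset (s := ⋃ b ∈ {b | b ∈ S}, {p | Associated (ℓ p) b}) ?_ ?_
  · refine Set.Finite.biUnion (Multiset.finite_toSet S) fun b _ => Set.Subsingleton.finite ?_
    intro p hp p' hp'
    obtain ⟨u, hu⟩ := (show Associated (ℓ p) b from hp).trans
      (show Associated (ℓ p') b from hp').symm
    obtain ⟨r, -, hr⟩ := MvPolynomial.isUnit_iff_eq_C_of_isReduced.1 u.isUnit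
    rw [hr, mul_comm] at hu
    rw [← p.mk_rep, ← p'.mk_rep]
    refine (mk_eq_of_smul r ?_ _ _).symm
    funext k
    rw [Pi.smul_apply, ← hcoeff, ← hcoeff, ← hu, MvPolynomial.coeff_C_mul, smul_eq_mul]
  · intro p hp
    have h1 : q ∈ (Ideal.span {ℓ p}).radical := by
      rw [← MvPolynomial.vanishingIdeal_zeroLocus_eq_radical (K := ℂ)]
      intro c hc
      rw [aeval_eq]
      refine hp c ?_
      have h2 := hc (ℓ p) (Ideal.mem_span_singleton_self _)
      rw [aeval_eq, heval] at h2
      rw [← p.mk_rep]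
      exact (pLinVanish_mk p.rep_nonzero).2 h2
    obtain ⟨r, hr⟩ := h1
    have h3 : ℓ p ∣ S.prod :=
      ((hprime p).dvd_of_dvd_pow (Ideal.mem_span_singleton.1 hr)).trans hSq.symm.dvd
    obtain ⟨b, hb, hdvd⟩ := (hprime p).exists_mem_multiset_dvd h3
    exact Set.mem_biUnion (x := b) hb ((hprime p).associated_of_dvd (hS b hb) hdvd)

/-- The non-vanishing locus of a polynomial in affine-linear coordinates is dense: restricted to the
complex line through any given point and a point of non-vanishing, the polynomial has finitely many
zeros. -/
theorem dense_eval_ne_zero {E σ : Type*} [AddCommGroup E] [Module ℂ E] [TopologicalSpace E]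
    [ContinuousAdd E] [ContinuousSMul ℂ E] (φ : E → σ → ℂ)
    (hφ : ∀ a b : E, ∀ s : ℂ, ∀ i, φ (a + s • (b - a)) i = φ a i + s * (φ b i - φ a i))
    (g : MvPolynomial σ ℂ) (b : E) (hb : MvPolynomial.eval (φ b) g ≠ 0) :
    Dense {a | MvPolynomial.eval (φ a) g ≠ 0} := by
  intro a
  let p : Polynomial ℂ :=
    MvPolynomial.aeval (fun i => Polynomial.C (φ a i) + Polynomial.X * Polynomial.C (φ b i - φ a i)) g
  have hp : ∀ s, p.eval s = MvPolynomial.eval (φ (a + s • (b - a))) g := by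
    intro s
    have : φ (a + s • (b - a)) = fun i => φ a i + s * (φ b i - φ a i) := funext (hφ a b s)
    rw [this]
    simp only [p]
    have h2 := MvPolynomial.map_aeval
      (fun i => Polynomial.C (φ a i) + Polynomial.X * Polynomial.C (φ b i - φ a i))
      (Polynomial.evalRingHom s) g
    simp only [Polynomial.coe_evalRingHom] at h2
    rw [h2]
    have h3 : (Polynomial.evalRingHom s).comp (algebraMap ℂ (Polynomial ℂ)) = RingHom.id ℂ := by
      ext r
      simp
    rw [h3]
    change MvPolynomial.eval _ g = _
    simp
  have hp0 : p ≠ 0 := by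
    intro h
    have := hp 1
    rw [h] at this
    apply hb
    simpa using this.symm
  have hd : Dense {s | p.eval s ≠ 0} := by
    have h1 : {s | p.eval s = 0}.Finite := by
      refine (p.roots.toFinset.finite_toSet).subset fun s hs => ?_
      simpa [hp0] using hs
    exact (dense_univ.sdiff_finite h1).mono fun s hs => hs.2
  have hc : Continuous fun s : ℂ => a + s • (b - a) := by fun_prop
  have := image_closure_subset_closure_image hc ⟨0, hd 0, rfl⟩
  simp only [zero_smul, add_zero] at this
  refine closure_mono ?_ this
  rintro _ ⟨s, hs, rfl⟩
  rw [Set.mem_ofPred_eq, hp] at hs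
  exact hs

theorem isOpen_eval_ne_zero {E σ : Type*} [TopologicalSpace E] {φ : E → σ → ℂ}
    (hφ : Continuous φ) (g : MvPolynomial σ ℂ) : IsOpen {a | MvPolynomial.eval (φ a) g ≠ 0} :=
  isOpen_compl_singleton.preimage ((MvPolynomial.continuous_eval g).comp hφ)

/-- The linear forms of a slice together with one more form on the `i`-th factor. -/
def extendForms {ι R : Type*} {n e : ι → ℕ} (i : ι) (L : (k : ι) → Fin (e k) → Fin (n k + 1) → R)
    (c : Fin (n i + 1) → R) :
    (o : Option ((k : ι) × Fin (e k))) → Fin (n (o.elim i Sigma.fst) + 1) → R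
  | none => c
  | some j => L j.1 j.2

/-- If some slice of type `e + e_i` misses `X`, then for generic `L` of type `e`, the slice of `X`
has finitely many `i`-th coordinates: all hyperplanes dual to these lie in one hypersurface. -/
theorem finite_proj {ι : Type*} [Fintype ι] [DecidableEq ι] {n e : ι → ℕ} {X : Set (PStack n)}
    (hX : IsAlgebraicSet X) (i : ι) (L' : SliceParams n (e + Pi.single i 1))
    (hL' : ¬ (X ∩ SliceZeros L').Nonempty) :
    ∃ U : Set (SliceParams n e), IsOpen U ∧ Dense U ∧
      ∀ L ∈ U, ((fun x : PStack n => x i) '' (X ∩ SliceZeros L)).Finite := by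
  have hle : ∀ k, e k ≤ (e + Pi.single i 1 : ι → ℕ) k := fun k => Nat.le_add_right _ _
  -- the slice `L'` consists of a slice of type `e` and one more form on the `i`-th factor
  let L₀ : SliceParams n e := fun k j => L' k (Fin.castLE (hle k) j)
  let c₀ : Fin (n i + 1) → ℂ := L' i ⟨e i, by simp⟩
  obtain ⟨g, hg₀, hg⟩ := elimination hX (fun o : Option ((k : ι) × Fin (e k)) => o.elim i Sigma.fst)
    (extendForms i L₀ c₀) (by
      intro x hx h
      refine hL' ⟨x, hx, fun k j => ?_⟩
      by_cases hj : j.1 < e k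
      · exact h (some ⟨k, ⟨j.1, hj⟩⟩)
      · have hk : k = i := by
          by_contra hk
          have := j.2
          simp [Pi.single_eq_of_ne hk] at this
          exact hj this
        subst hk
        have hj' : j = ⟨e k, by simp⟩ := by
          have := j.2
          simp only [Pi.add_apply, Pi.single_eq_same] at this
          ext
          simp only
          omega
        rw [hj']
        exact h none)
  obtain ⟨φ, hφ⟩ : ∃ φ : SliceParams n e →
      (o : Option ((k : ι) × Fin (e k))) × Fin (n (o.elim i Sigma.fst) + 1) → ℂ,
      ∀ L p, φ L p = extendForms i L c₀ p.1 p.2 := ⟨_, fun _ _ => rfl⟩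
  have hφ' : ∀ L, φ L = fun p => extendForms i L c₀ p.1 p.2 := fun L => funext (hφ L)
  have hcont : Continuous φ := by
    refine continuous_pi ?_
    rintro ⟨_ | j, k⟩
    · simp only [hφ, extendForms]
      exact continuous_const
    · simp only [hφ, extendForms]
      fun_prop
  refine ⟨{L | MvPolynomial.eval (φ L) g ≠ 0}, isOpen_eval_ne_zero hcont g,
    dense_eval_ne_zero φ ?_ g L₀ ?_, ?_⟩
  · rintro a b s ⟨_ | j, k⟩
    · simp [hφ, extendForms]
    · simp [hφ, extendForms]
      rfl
  · rw [hφ']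
    exact hg₀
  · intro L hL
    -- with `L` fixed, `g` becomes a polynomial in the coefficients of the additional form
    let q : MvPolynomial (Fin (n i + 1)) ℂ := MvPolynomial.aeval
      (fun p : (o : Option ((k : ι) × Fin (e k))) × Fin (n (o.elim i Sigma.fst) + 1) =>
        extendForms i (fun k j a => MvPolynomial.C (L k j a)) MvPolynomial.X p.1 p.2) g
    have hq : ∀ c, MvPolynomial.eval c q =
        MvPolynomial.eval (fun p => extendForms i L c p.1 p.2) g := by
      intro c
      rw [eval_subst]
      congr 2
      funext p
      obtain ⟨_ | j, k⟩ := p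
      · exact MvPolynomial.eval_X (f := c) k
      · simp [extendForms]
    have hq0 : q ≠ 0 := by
      intro h
      apply hL
      rw [hφ', ← hq, h, map_zero]
    refine (finite_hyperplanes hq0).subset ?_
    rintro _ ⟨x, ⟨hx, hxL⟩, rfl⟩ c hc
    rw [hq]
    refine hg _ x hx ?_
    rintro (_ | j)
    · exact hc
    · exact hxL j.1 j.2

/-- A nonempty algebraic set has nonempty multidimension: a type `e` that is maximal among those
for which every slice meets `X` belongs to `Dim(X)`. -/
theorem mDim_nonempty {ι : Type*} [Fintype ι] {n : ι → ℕ} {X : Set (PStack n)}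
    (hX : IsAlgebraicSet X) (hne : X.Nonempty) : (MDim X).Nonempty := by
  classical
  let E : Set (ι → ℕ) := {e | ∀ L : SliceParams n e, (X ∩ SliceZeros L).Nonempty}
  have hE : ∀ e ∈ E, e ≤ n := by
    intro e he i
    by_contra hi
    replace hi : n i < e i := not_le.1 hi
    -- `n i + 1` coordinate hyperplanes have no common point
    obtain ⟨x, -, hx⟩ := he fun i' j a => if a.val = j.val then 1 else 0
    obtain ⟨v, hv⟩ := exists_isRep x
    obtain ⟨a, ha⟩ := Function.ne_iff.1 (hv i).1
    have := (hv.pLinVanish i _).1 (hx i ⟨a.1, by have := a.2; omega⟩)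
    simp only [Fin.val_inj, ite_mul, one_mul, zero_mul, Finset.sum_ite_eq', Finset.mem_univ,
      if_true] at this
    exact ha this
  have h0 : (0 : ι → ℕ) ∈ E := by
    intro L
    obtain ⟨x, hx⟩ := hne
    exact ⟨x, hx, fun i j => j.elim0⟩
  obtain ⟨e, he, hmax⟩ := ((Set.finite_Iic n).subset hE).exists_maximal ⟨0, h0⟩
  refine ⟨e, hE e he, ?_⟩
  have hstep : ∀ i, ∃ L : SliceParams n (e + Pi.single i 1), ¬ (X ∩ SliceZeros L).Nonempty := by
    intro i
    by_contra! h
    have := hmax (y := e + Pi.single i 1) h (fun k => Nat.le_add_right _ _) i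
    simp at this
  choose L' hL' using hstep
  choose U hUo hUd hU using fun i => finite_proj hX i (L' i) (hL' i)
  refine ⟨⋂ i, U i, isOpen_iInter_of_finite hUo, dense_iInter_of_isOpen hUo hUd, fun L hL => ?_⟩
  refine ⟨?_, he L⟩
  refine (Set.Finite.pi' fun i => hU i L (Set.mem_iInter.1 hL i)).subset ?_
  exact fun x hx i => ⟨x, hx, rfl⟩

/-! ### Generic properties on products -/

/-- Independent conditions hold generically together exactly when each holds generically. The
projections of a product are open and surjective, so they preserve dense open sets. -/
theorem generic_prod {α β : Type*} [TopologicalSpace α] [TopologicalSpace β] [Nonempty α]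
    [Nonempty β] {P : α → Prop} {Q : β → Prop} :
    Generic (fun x : α × β => P x.1 ∧ Q x.2) ↔ Generic P ∧ Generic Q := by
  constructor
  · rintro ⟨U, hUo, hUd, hU⟩
    refine ⟨⟨Prod.fst '' U, isOpenMap_fst U hUo,
      Prod.fst_surjective.denseRange.dense_image continuous_fst hUd, ?_⟩,
      ⟨Prod.snd '' U, isOpenMap_snd U hUo,
      Prod.snd_surjective.denseRange.dense_image continuous_snd hUd, ?_⟩⟩
    · rintro _ ⟨x, hx, rfl⟩
      exact (hU x hx).1
    · rintro _ ⟨x, hx, rfl⟩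
      exact (hU x hx).2
  · rintro ⟨⟨U, hUo, hUd, hU⟩, V, hVo, hVd, hV⟩
    exact ⟨U ×ˢ V, hUo.prod hVo, hUd.prod hVd, fun x hx => ⟨hU _ hx.1, hV _ hx.2⟩⟩

theorem Generic.of_homeomorph {α β : Type*} [TopologicalSpace α] [TopologicalSpace β]
    (f : α ≃ₜ β) {P : β → Prop} (h : Generic fun a => P (f a)) : Generic P := by
  obtain ⟨U, hUo, hUd, hU⟩ := h
  refine ⟨f '' U, f.isOpenMap U hUo, f.surjective.denseRange.dense_image f.continuous hUd, ?_⟩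
  rintro _ ⟨a, ha, rfl⟩
  exact hU a ha

/-! ### Products of algebraic sets -/

section Product

variable {ι₁ ι₂ : Type*} {n₁ : ι₁ → ℕ} {n₂ : ι₂ → ℕ}

theorem combine_proj (x : PStack (Sum.elim n₁ n₂)) : combine (projL x) (projR x) = x := by
  funext i
  cases i <;> rfl

theorem mem_prodSet {Y : Set (PStack n₁)} {Z : Set (PStack n₂)} {x : PStack (Sum.elim n₁ n₂)} :
    x ∈ prodSet Y Z ↔ projL x ∈ Y ∧ projR x ∈ Z := by
  constructor
  · rintro ⟨y, hy, z, hz, rfl⟩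
    exact ⟨hy, hz⟩
  · rintro ⟨hy, hz⟩
    exact ⟨_, hy, _, hz, (combine_proj x).symm⟩

theorem combine_mem_prodSet {Y : Set (PStack n₁)} {Z : Set (PStack n₂)} {y : PStack n₁}
    {z : PStack n₂} : combine y z ∈ prodSet Y Z ↔ y ∈ Y ∧ z ∈ Z :=
  mem_prodSet

/-- Homogeneous coordinates of a pair of points. -/
def combineRep (v : (i : ι₁) → Fin (n₁ i + 1) → ℂ) (w : (i : ι₂) → Fin (n₂ i + 1) → ℂ) :
    (i : ι₁ ⊕ ι₂) → Fin (Sum.elim n₁ n₂ i + 1) → ℂ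
  | Sum.inl a => v a
  | Sum.inr b => w b

theorem isRep_combineRep {v : (i : ι₁) → Fin (n₁ i + 1) → ℂ}
    {w : (i : ι₂) → Fin (n₂ i + 1) → ℂ} {x : PStack (Sum.elim n₁ n₂)} :
    IsRep (combineRep v w) x ↔ IsRep v (projL x) ∧ IsRep w (projR x) :=
  ⟨fun h => ⟨fun i => h (Sum.inl i), fun i => h (Sum.inr i)⟩,
    fun h i => match i with
      | Sum.inl a => h.1 a
      | Sum.inr b => h.2 b⟩

theorem exists_combineRep (u : (i : ι₁ ⊕ ι₂) → Fin (Sum.elim n₁ n₂ i + 1) → ℂ) :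
    ∃ (v : (i : ι₁) → Fin (n₁ i + 1) → ℂ) (w : (i : ι₂) → Fin (n₂ i + 1) → ℂ),
      u = combineRep v w :=
  ⟨fun a => u (Sum.inl a), fun b => u (Sum.inr b), funext fun i => by cases i <;> rfl⟩

theorem polyVanish_combine {f : MvPolynomial ((i : ι₁ ⊕ ι₂) × Fin (Sum.elim n₁ n₂ i + 1)) ℂ}
    {x : PStack (Sum.elim n₁ n₂)} :
    PolyVanish f x ↔ ∀ v w, IsRep v (projL x) → IsRep w (projR x) →
      MvPolynomial.eval (fun p => combineRep v w p.1 p.2) f = 0 := by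
  constructor
  · intro h v w hv hw
    exact h _ (isRep_combineRep.2 ⟨hv, hw⟩)
  · intro h u hu
    obtain ⟨v, w, rfl⟩ := exists_combineRep u
    have := isRep_combineRep.1 hu
    exact h v w this.1 this.2

theorem isAlgebraicSet_inter {ι : Type*} {n : ι → ℕ} {A B : Set (PStack n)}
    (hA : IsAlgebraicSet A) (hB : IsAlgebraicSet B) : IsAlgebraicSet (A ∩ B) := by
  obtain ⟨F, rfl⟩ := hA
  obtain ⟨G, rfl⟩ := hB
  refine ⟨F ∪ G, Set.ext fun x => ⟨?_, ?_⟩⟩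
  · rintro ⟨h1, h2⟩ f (hf | hf)
    · exact h1 f hf
    · exact h2 f hf
  · intro h
    exact ⟨fun f hf => h f (Or.inl hf), fun f hf => h f (Or.inr hf)⟩

theorem isAlgebraicSet_projL {Y : Set (PStack n₁)} (hY : IsAlgebraicSet Y) :
    IsAlgebraicSet {x : PStack (Sum.elim n₁ n₂) | projL x ∈ Y} := by
  obtain ⟨F, rfl⟩ := hY
  let r : (i : ι₁) × Fin (n₁ i + 1) → (i : ι₁ ⊕ ι₂) × Fin (Sum.elim n₁ n₂ i + 1) :=
    fun p => ⟨Sum.inl p.1, p.2⟩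
  refine ⟨MvPolynomial.rename r '' F, Set.ext fun x => ?_⟩
  simp only [Set.mem_ofPred_eq, Set.forall_mem_image, polyVanish_combine, MvPolynomial.eval_rename]
  refine forall₂_congr fun f _ => ⟨fun h v w hv _ => h v hv, fun h v hv => ?_⟩
  obtain ⟨w, hw⟩ := exists_isRep (projR x)
  exact h v w hv hw

theorem isAlgebraicSet_projR {Z : Set (PStack n₂)} (hZ : IsAlgebraicSet Z) :
    IsAlgebraicSet {x : PStack (Sum.elim n₁ n₂) | projR x ∈ Z} := by
  obtain ⟨F, rfl⟩ := hZ
  let r : (i : ι₂) × Fin (n₂ i + 1) → (i : ι₁ ⊕ ι₂) × Fin (Sum.elim n₁ n₂ i + 1) :=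
    fun p => ⟨Sum.inr p.1, p.2⟩
  refine ⟨MvPolynomial.rename r '' F, Set.ext fun x => ?_⟩
  simp only [Set.mem_ofPred_eq, Set.forall_mem_image, polyVanish_combine, MvPolynomial.eval_rename]
  refine forall₂_congr fun f _ => ⟨fun h v w _ hw => h w hw, fun h w hw => ?_⟩
  obtain ⟨v, hv⟩ := exists_isRep (projL x)
  exact h v w hv hw

theorem isAlgebraicSet_prodSet {Y : Set (PStack n₁)} {Z : Set (PStack n₂)}
    (hY : IsAlgebraicSet Y) (hZ : IsAlgebraicSet Z) : IsAlgebraicSet (prodSet Y Z) := by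
  have : prodSet Y Z = {x | projL x ∈ Y} ∩ {x | projR x ∈ Z} := Set.ext fun x => mem_prodSet
  rw [this]
  exact isAlgebraicSet_inter (isAlgebraicSet_projL hY) (isAlgebraicSet_projR hZ)

/-- The set of points `z` whose fibre over `Y` lies in an algebraic set is algebraic: it is cut out
by the equations of that set with coordinates of points of `Y` substituted. -/
theorem isAlgebraicSet_forall_left (Y : Set (PStack n₁)) {A : Set (PStack (Sum.elim n₁ n₂))}
    (hA : IsAlgebraicSet A) : IsAlgebraicSet {z : PStack n₂ | ∀ y ∈ Y, combine y z ∈ A} := by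
  obtain ⟨F, rfl⟩ := hA
  let sub (v : (i : ι₁) → Fin (n₁ i + 1) → ℂ) :
      (p : (i : ι₁ ⊕ ι₂) × Fin (Sum.elim n₁ n₂ i + 1)) →
        MvPolynomial ((i : ι₂) × Fin (n₂ i + 1)) ℂ
    | ⟨Sum.inl a, k⟩ => MvPolynomial.C (v a k)
    | ⟨Sum.inr b, k⟩ => MvPolynomial.X ⟨b, k⟩
  have hsub : ∀ v w f, MvPolynomial.eval (fun p => w p.1 p.2) (MvPolynomial.aeval (sub v) f) =
      MvPolynomial.eval (fun p => combineRep v w p.1 p.2) f := by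
    intro v w f
    rw [eval_subst]
    congr 2
    funext p
    obtain ⟨a | b, k⟩ := p <;> simp [sub, combineRep]
  refine ⟨{h | ∃ y ∈ Y, ∃ v, IsRep v y ∧ ∃ f ∈ F, h = MvPolynomial.aeval (sub v) f},
    Set.ext fun z => ⟨?_, ?_⟩⟩
  · rintro hz _ ⟨y, hy, v, hv, f, hf, rfl⟩ w hw
    rw [hsub]
    exact polyVanish_combine.1 (hz y hy f hf) v w hv hw
  · intro hz y hy f hf
    rw [polyVanish_combine]
    intro v w hv hw
    rw [← hsub]
    exact hz _ ⟨y, hy, v, hv, f, hf, rfl⟩ w hw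

/-- The fibre of an algebraic set over a point of the second group of factors is algebraic. -/
theorem isAlgebraicSet_fibre {A : Set (PStack (Sum.elim n₁ n₂))} (hA : IsAlgebraicSet A)
    (z : PStack n₂) : IsAlgebraicSet {y : PStack n₁ | combine y z ∈ A} := by
  obtain ⟨F, rfl⟩ := hA
  let sub (w : (i : ι₂) → Fin (n₂ i + 1) → ℂ) :
      (p : (i : ι₁ ⊕ ι₂) × Fin (Sum.elim n₁ n₂ i + 1)) →
        MvPolynomial ((i : ι₁) × Fin (n₁ i + 1)) ℂ
    | ⟨Sum.inl a, k⟩ => MvPolynomial.X ⟨a, k⟩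
    | ⟨Sum.inr b, k⟩ => MvPolynomial.C (w b k)
  have hsub : ∀ v w f, MvPolynomial.eval (fun p => v p.1 p.2) (MvPolynomial.aeval (sub w) f) =
      MvPolynomial.eval (fun p => combineRep v w p.1 p.2) f := by
    intro v w f
    rw [eval_subst]
    congr 2
    funext p
    obtain ⟨a | b, k⟩ := p <;> simp [sub, combineRep]
  refine ⟨{h | ∃ w, IsRep w z ∧ ∃ f ∈ F, h = MvPolynomial.aeval (sub w) f},
    Set.ext fun y => ⟨?_, ?_⟩⟩
  · rintro hy _ ⟨w, hw, f, hf, rfl⟩ v hv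
    rw [hsub]
    exact polyVanish_combine.1 (hy f hf) v w hv hw
  · intro hy f hf
    rw [polyVanish_combine]
    intro v w hv hw
    rw [← hsub]
    exact hy _ ⟨w, hw, f, hf, rfl⟩ v hv

/-- If `Y × Z ⊆ A ∪ B`, then by irreducibility of `Y` each fibre over a point of `Z` lies in `A` or
in `B`; the two sets of such points are algebraic and cover `Z`, which is irreducible. -/
theorem isIrredVariety_prodSet {Y : Set (PStack n₁)} {Z : Set (PStack n₂)}
    (hY : IsIrredVariety Y) (hZ : IsIrredVariety Z) : IsIrredVariety (prodSet Y Z) := by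
  obtain ⟨hYa, ⟨y₀, hy₀⟩, hYi⟩ := hY
  obtain ⟨hZa, ⟨z₀, hz₀⟩, hZi⟩ := hZ
  refine ⟨isAlgebraicSet_prodSet hYa hZa, ⟨combine y₀ z₀, y₀, hy₀, z₀, hz₀, rfl⟩, ?_⟩
  intro A B hA hB hAB
  have hfib : ∀ {A : Set (PStack (Sum.elim n₁ n₂))},
      Z ⊆ {z | ∀ y ∈ Y, combine y z ∈ A} → prodSet Y Z ⊆ A := by
    rintro A h _ ⟨y, hy, z, hz, rfl⟩
    exact h hz y hy
  refine (hZi _ _ (isAlgebraicSet_forall_left Y hA) (isAlgebraicSet_forall_left Y hB) ?_).imp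
    hfib hfib
  intro z hz
  exact hYi _ _ (isAlgebraicSet_fibre hA z) (isAlgebraicSet_fibre hB z)
    fun y hy => hAB ⟨y, hy, z, hz, rfl⟩

/-! ### Slices and multidimension of a product -/

/-- A slice of a product is the product of the slices of the factors. -/
theorem prodSet_inter_sliceZeros (Y : Set (PStack n₁)) (Z : Set (PStack n₂)) {e : ι₁ ⊕ ι₂ → ℕ}
    (L : SliceParams (Sum.elim n₁ n₂) e) :
    prodSet Y Z ∩ SliceZeros L =
      prodSet (Y ∩ SliceZeros (e := e ∘ Sum.inl) fun a => L (Sum.inl a))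
        (Z ∩ SliceZeros (e := e ∘ Sum.inr) fun b => L (Sum.inr b)) := by
  ext x
  rw [Set.mem_inter_iff, mem_prodSet, mem_prodSet]
  constructor
  · rintro ⟨⟨hy, hz⟩, h⟩
    exact ⟨⟨hy, fun a j => h (Sum.inl a) j⟩, ⟨hz, fun b j => h (Sum.inr b) j⟩⟩
  · rintro ⟨⟨hy, h1⟩, hz, h2⟩
    refine ⟨⟨hy, hz⟩, ?_⟩
    rintro (a | b) j
    · exact h1 a j
    · exact h2 b j

theorem prodSet_eq_image (Y : Set (PStack n₁)) (Z : Set (PStack n₂)) :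
    prodSet Y Z = (fun p : PStack n₁ × PStack n₂ => combine p.1 p.2) '' (Y ×ˢ Z) := by
  ext x
  constructor
  · rintro ⟨y, hy, z, hz, rfl⟩
    exact ⟨(y, z), ⟨hy, hz⟩, rfl⟩
  · rintro ⟨⟨y, z⟩, ⟨hy, hz⟩, rfl⟩
    exact ⟨y, hy, z, hz, rfl⟩

theorem prodSet_finite_nonempty (Y : Set (PStack n₁)) (Z : Set (PStack n₂)) :
    (prodSet Y Z).Finite ∧ (prodSet Y Z).Nonempty ↔
      (Y.Finite ∧ Y.Nonempty) ∧ Z.Finite ∧ Z.Nonempty := by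
  have hinj : Function.Injective fun p : PStack n₁ × PStack n₂ => combine p.1 p.2 :=
    fun p q h => Prod.ext (congrArg projL h) (congrArg projR h)
  rw [prodSet_eq_image, Set.finite_image_iff hinj.injOn, Set.image_nonempty, Set.prod_nonempty_iff]
  constructor
  · rintro ⟨hf, hy, hz⟩
    exact ⟨⟨hf.of_prod_left hz, hy⟩, hf.of_prod_right hy, hz⟩
  · rintro ⟨⟨hf, hy⟩, hf', hz⟩
    exact ⟨hf.prod hf', hy, hz⟩

theorem mem_mDim_prodSet (Y : Set (PStack n₁)) (Z : Set (PStack n₂)) (e : ι₁ ⊕ ι₂ → ℕ) :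
    e ∈ MDim (prodSet Y Z) ↔ (e ∘ Sum.inl) ∈ MDim Y ∧ (e ∘ Sum.inr) ∈ MDim Z := by
  let f : SliceParams (Sum.elim n₁ n₂) e ≃ₜ
      SliceParams n₁ (e ∘ Sum.inl) × SliceParams n₂ (e ∘ Sum.inr) :=
    Homeomorph.sumPiEquivProdPi ι₁ ι₂ fun i => Fin (e i) → Fin (Sum.elim n₁ n₂ i + 1) → ℂ
  let P : SliceParams n₁ (e ∘ Sum.inl) → Prop := fun L =>
    (Y ∩ SliceZeros L).Finite ∧ (Y ∩ SliceZeros L).Nonempty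
  let Q : SliceParams n₂ (e ∘ Sum.inr) → Prop := fun L =>
    (Z ∩ SliceZeros L).Finite ∧ (Z ∩ SliceZeros L).Nonempty
  have hPQ : (fun L : SliceParams (Sum.elim n₁ n₂) e =>
      (prodSet Y Z ∩ SliceZeros L).Finite ∧ (prodSet Y Z ∩ SliceZeros L).Nonempty) =
      fun L => P (f L).1 ∧ Q (f L).2 := by
    funext L
    rw [prodSet_inter_sliceZeros, prodSet_finite_nonempty]
    rfl
  have hgen : Generic (fun L => P (f L).1 ∧ Q (f L).2) ↔ Generic P ∧ Generic Q := by
    rw [← generic_prod]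
    constructor
    · exact fun h => Generic.of_homeomorph f (P := fun x => P x.1 ∧ Q x.2) h
    · intro h
      refine Generic.of_homeomorph f.symm (P := fun L => P (f L).1 ∧ Q (f L).2) ?_
      simpa only [Homeomorph.apply_symm_apply] using h
  simp only [MDim, Set.mem_ofPred_eq]
  rw [hPQ, hgen, Sum.forall]
  exact and_and_and_comm

/-- Total degrees of the vectors in a multidimension are bounded by the dimension of the ambient
space. -/
theorem bddAbove_mDim {ι : Type*} [Fintype ι] {n : ι → ℕ} (X : Set (PStack n)) :
    BddAbove {m | ∃ e ∈ MDim X, ∑ i, e i = m} := by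
  refine ⟨∑ i, n i, ?_⟩
  rintro _ ⟨e, he, rfl⟩
  exact Finset.sum_le_sum fun i _ => he.1 i

/-- Additivity of the dimension. As `dimOf` is a supremum in the natural numbers, which is `0` for
the empty set, both multidimensions have to be nonempty. -/
theorem dimOf_prodSet [Fintype ι₁] [Fintype ι₂] (Y : Set (PStack n₁)) (Z : Set (PStack n₂))
    (hY : (MDim Y).Nonempty) (hZ : (MDim Z).Nonempty) :
    dimOf (prodSet Y Z) = dimOf Y + dimOf Z := by
  have s₁ : {m | ∃ e ∈ MDim Y, ∑ i, e i = m}.Nonempty := hY.elim fun e he => ⟨_, e, he, rfl⟩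
  have s₂ : {m | ∃ e ∈ MDim Z, ∑ i, e i = m}.Nonempty := hZ.elim fun e he => ⟨_, e, he, rfl⟩
  obtain ⟨e₁, he₁, h₁⟩ := Nat.sSup_mem s₁ (bddAbove_mDim Y)
  obtain ⟨e₂, he₂, h₂⟩ := Nat.sSup_mem s₂ (bddAbove_mDim Z)
  refine IsGreatest.csSup_eq ⟨⟨Sum.elim e₁ e₂, ?_, ?_⟩, ?_⟩
  · rw [mem_mDim_prodSet]
    exact ⟨he₁, he₂⟩
  · rw [Fintype.sum_sum_type]
    exact congrArg₂ _ h₁ h₂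
  · rintro _ ⟨e, he, rfl⟩
    rw [mem_mDim_prodSet] at he
    rw [Fintype.sum_sum_type]
    exact add_le_add (le_csSup (bddAbove_mDim Y) ⟨_, he.1, rfl⟩)
      (le_csSup (bddAbove_mDim Z) ⟨_, he.2, rfl⟩)

end Product

/-- The Cartesian product of irreducible multiprojective varieties in
disjoint groups of factors is irreducible, its dimension is the sum of the
dimensions, and its multidimension is the product of the multidimensions. -/
theorem prod_irred_dim_mdim {ι₁ ι₂ : Type*}
    [Fintype ι₁] [DecidableEq ι₁] [Fintype ι₂] [DecidableEq ι₂]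
    {n₁ : ι₁ → ℕ} {n₂ : ι₂ → ℕ}
    (Y : Set (PStack n₁)) (Z : Set (PStack n₂))
    (hY : IsIrredVariety Y) (hZ : IsIrredVariety Z) :
    IsIrredVariety (prodSet Y Z) ∧
    dimOf (prodSet Y Z) = dimOf Y + dimOf Z ∧
    ∀ e : ι₁ ⊕ ι₂ → ℕ,
      e ∈ MDim (prodSet Y Z) ↔ ((e ∘ Sum.inl) ∈ MDim Y ∧ (e ∘ Sum.inr) ∈ MDim Z) := by
  exact ⟨isIrredVariety_prodSet hY hZ, dimOf_prodSet Y Z (mDim_nonempty hY.1 hY.2.1)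
    (mDim_nonempty hZ.1 hZ.2.1), mem_mDim_prodSet Y Z⟩
end

section
/- Let X ⊂ P^{n_1} × ... × P^{n_k} be an equidimensional multiprojective variety whose projection to the i-th factor has dimension at least 1, and let ℓ be a general linear polynomial in the i-th variable group. Then Dim(X ∩ V(ℓ)) = { e − ε_i : e ∈ Dim(X) and e_i > 0 }, and for each such e, Deg_{X∩V(ℓ)}(e − ε_i) = Deg_X(e), where ε_i is the i-th standard basis vector. -/
/-!
A slice of `X ∩ V(ℓ)` of type `e` is a slice of `X` of type `e + ε_i` whose last form in the `i`-th
group of variables is `ℓ`. The claim is therefore a Fubini principle: a condition on the pair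
(slice `L` of type `e`, form `ℓ`) holds for general `(L, ℓ)` if and only if, for general `ℓ`, it
holds for general `L`. For a merely dense open set of pairs this can fail, since the good `ℓ` need
only be residual; it holds for conditions that are constructible in the Zariski sense, because such
a condition is identically true or identically false where some nonzero polynomial `g` does not
vanish (`Constr.decided`), and the bad `ℓ` are then zeros of a nonzero specialization of `g`
(`Constr.generic_fibre`).

It remains to see that the slice is finite and nonempty and the slice consists of exactly `d`
points are constructible in the coefficients of the slice. Points of multiprojective space are
replaced by normalized representatives (first nonzero coordinate of each factor equal to `1`), so
that slices become the fibres of a constructible family in affine space (`image_normRep`,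
`constr_incidence`). By Chevalley's theorem (`Constr.proj`) the condition at least `d` points in the
fibre is constructible. A fibre is infinite exactly when one of its coordinate projections is, and
for subsets of a line infinitude is read off from a normal form `⋃ {g = 0, f ≠ 0}`: some piece has
all `g` identically zero and `f` not identically zero (`Constr.infinite_line`).

Only the finitely many types `e ≤ n` occur, each with at most one degree, so finitely many generic
conditions on `ℓ` suffice. The box constraint `e_i + 1 ≤ n_i` on the type of the larger slice is
automatic, because `n_i + 1` general forms on the `i`-th factor have no common zero
(`not_generic_nonempty`).
-/

open scoped BigOperators

open MultiProj

namespace SliceAux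
open Topology PrimeSpectrum MultiProj

/-- A predicate on the affine space `σ → ℂ` is constructible when it is the trace on closed points
of a constructible subset of the prime spectrum of the coordinate ring. -/
def Constr {σ : Type*} (S : (σ → ℂ) → Prop) : Prop :=
  ∃ C : Set (PrimeSpectrum (MvPolynomial σ ℂ)), IsConstructible C ∧
    ∀ x, S x ↔ MvPolynomial.pointToPoint x ∈ C

/-! ### Constructible predicates on affine space -/

section Basic

variable {σ τ : Type*}

lemma Constr.congr {S T : (σ → ℂ) → Prop} (hS : Constr S) (h : ∀ x, T x ↔ S x) : Constr T := by
  obtain ⟨C, hC, hS⟩ := hS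
  exact ⟨C, hC, fun x => (h x).trans (hS x)⟩

lemma Constr.not {S : (σ → ℂ) → Prop} (hS : Constr S) : Constr (fun x => ¬ S x) := by
  obtain ⟨C, hC, hS⟩ := hS
  exact ⟨Cᶜ, isConstructible_compl.2 hC, fun x => by simp [hS]⟩

lemma Constr.and {S T : (σ → ℂ) → Prop} (hS : Constr S) (hT : Constr T) :
    Constr (fun x => S x ∧ T x) := by
  obtain ⟨C, hC, hS⟩ := hS
  obtain ⟨D, hD, hT⟩ := hT
  exact ⟨C ∩ D, hC.inter hD, fun x => by simp [hS, hT]⟩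

lemma Constr.all {α : Type*} [Finite α] {S : α → (σ → ℂ) → Prop} (hS : ∀ a, Constr (S a)) :
    Constr (fun x => ∀ a, S a x) := by
  choose C hC hS using hS
  exact ⟨⋂ a, C a, IsConstructible.iInter hC, fun x => by simp [hS]⟩

lemma Constr.ex {α : Type*} [Finite α] {S : α → (σ → ℂ) → Prop} (hS : ∀ a, Constr (S a)) :
    Constr (fun x => ∃ a, S a x) :=
  (Constr.all fun a => (hS a).not).not.congr fun x => by simp

lemma Constr.const (p : Prop) : Constr (fun _ : σ → ℂ => p) := by
  by_cases hp : p
  · exact ⟨Set.univ, .univ, by simp [hp]⟩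
  · exact ⟨∅, .empty, by simp [hp]⟩

lemma Constr.imp {S T : (σ → ℂ) → Prop} (hS : Constr S) (hT : Constr T) :
    Constr (fun x => S x → T x) :=
  (hS.and hT.not).not.congr fun x => by tauto

lemma mem_pointToPoint (x : σ → ℂ) (f : MvPolynomial σ ℂ) :
    f ∈ (MvPolynomial.pointToPoint (k := ℂ) x).asIdeal ↔ MvPolynomial.eval x f = 0 := by
  change f ∈ MvPolynomial.vanishingIdeal ℂ {x} ↔ _
  rw [MvPolynomial.mem_vanishingIdeal_singleton_iff]
  rfl

lemma Constr.zero (f : MvPolynomial σ ℂ) : Constr (fun x => MvPolynomial.eval x f = 0) := by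
  refine ⟨(basicOpen f : Set _)ᶜ, isConstructible_compl.2 isConstructible_basicOpen, fun x => ?_⟩
  simp [mem_pointToPoint]

/-- Every common zero set is cut out by finitely many polynomials, by Hilbert's basis theorem. -/
lemma Constr.zeros [Finite σ] (F : Set (MvPolynomial σ ℂ)) :
    Constr (fun x => ∀ f ∈ F, MvPolynomial.eval x f = 0) := by
  obtain ⟨t, ht⟩ := IsNoetherian.noetherian (Ideal.span F)
  have h : ∀ x : σ → ℂ, (∀ f ∈ F, MvPolynomial.eval x f = 0) ↔
      ∀ f : t, MvPolynomial.eval x f = 0 := by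
    intro x
    have key : ∀ G : Set (MvPolynomial σ ℂ), (∀ f ∈ G, MvPolynomial.eval x f = 0) ↔
        Ideal.span G ≤ RingHom.ker (MvPolynomial.eval x) := by
      intro G
      rw [Ideal.span_le]
      rfl
    rw [key, ← ht]
    exact (key _).symm.trans (by simp)
  exact (Constr.all fun f : t => Constr.zero f.1).congr h

/-- A constructible predicate is a finite union of pieces `{g₁ = ⋯ = gₘ = 0, f ≠ 0}`. -/
lemma Constr.normalForm {S : (σ → ℂ) → Prop} (hS : Constr S) :
    ∃ I : Finset (BasicConstructibleSetData (MvPolynomial σ ℂ)), ∀ x, S x ↔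
      ∃ B ∈ I, (∀ j, MvPolynomial.eval x (B.g j) = 0) ∧ MvPolynomial.eval x B.f ≠ 0 := by
  obtain ⟨C, hC, hS⟩ := hS
  obtain ⟨I, rfl⟩ := exists_constructibleSetData_iff.2 hC
  refine ⟨I, fun x => (hS x).trans ?_⟩
  simp [ConstructibleSetData.toSet, BasicConstructibleSetData.toSet, mem_zeroLocus,
    Set.range_subset_iff, mem_pointToPoint, and_left_comm]

lemma comap_pointToPoint (f : σ → τ) (y : τ → ℂ) :
    comap (MvPolynomial.rename (R := ℂ) f).toRingHom (MvPolynomial.pointToPoint (k := ℂ) y) =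
      MvPolynomial.pointToPoint (y ∘ f) := by
  ext p
  rw [mem_pointToPoint]
  change MvPolynomial.rename f p ∈ (MvPolynomial.pointToPoint (k := ℂ) y).asIdeal ↔ _
  rw [mem_pointToPoint, MvPolynomial.eval_rename]

lemma Constr.subst {S : (σ → ℂ) → Prop} (hS : Constr S) (f : σ → τ) :
    Constr (fun y : τ → ℂ => S (y ∘ f)) := by
  obtain ⟨C, hC, hS⟩ := hS
  obtain ⟨I, rfl⟩ := exists_constructibleSetData_iff.2 hC
  refine ⟨_, exists_constructibleSetData_iff.1
    ⟨I.map (MvPolynomial.rename (R := ℂ) f).toRingHom, rfl⟩, fun y => ?_⟩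
  rw [ConstructibleSetData.toSet_map, Set.mem_preimage, comap_pointToPoint]
  exact hS _

end Basic

/-! ### Projections, infinitude and counting of fibres -/

/-- Chevalley's theorem on closed points: coordinate projections preserve constructibility.
The Nullstellensatz moves a prime of the fibre to a closed point of the fibre. -/
lemma Constr.proj {σ τ : Type*} [Finite σ] [Finite τ] {S : (τ → ℂ) → Prop} (hS : Constr S)
    (f : σ → τ) : Constr (fun x : σ → ℂ => ∃ y, y ∘ f = x ∧ S y) := by
  obtain ⟨C, hC, hS⟩ := hS
  obtain ⟨I, rfl⟩ := exists_constructibleSetData_iff.2 hC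
  set φ := (MvPolynomial.rename (R := ℂ) f).toRingHom with hφ
  have hfp : φ.FinitePresentation := by
    apply RingHom.FinitePresentation.of_finiteType.1
    have : (φ.comp (algebraMap ℂ (MvPolynomial σ ℂ))).FiniteType := by
      have h : φ.comp (algebraMap ℂ (MvPolynomial σ ℂ)) = algebraMap ℂ (MvPolynomial τ ℂ) :=
        (MvPolynomial.rename (R := ℂ) f).comp_algebraMap
      rw [h, RingHom.finiteType_algebraMap]
      infer_instance
    exact RingHom.FiniteType.of_comp_finiteType this
  refine ⟨_, isConstructible_comap_image hfp hC, fun x => ⟨?_, ?_⟩⟩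
  · rintro ⟨y, rfl, hy⟩
    exact ⟨_, (hS y).1 hy, comap_pointToPoint f y⟩
  · rintro ⟨q, hq, hqx⟩
    simp only [ConstructibleSetData.toSet, Set.mem_iUnion] at hq
    obtain ⟨B, hB, hqB⟩ := hq
    have hg : ∀ j, B.g j ∈ q.asIdeal := by
      have := hqB.1
      simpa [mem_zeroLocus, Set.range_subset_iff] using this
    have hf : B.f ∉ q.asIdeal := by
      have := hqB.2
      simpa [mem_zeroLocus] using this
    rw [← MvPolynomial.IsPrime.vanishingIdeal_zeroLocus (K := ℂ) q.asIdeal] at hf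
    rw [MvPolynomial.mem_vanishingIdeal_iff] at hf
    push Not at hf
    obtain ⟨y, hy, hfy⟩ := hf
    refine ⟨y, ?_, (hS y).2 ?_⟩
    · funext a
      -- the polynomial `X a - x a` vanishes at `x`, so its renaming lies in `q`
      have h1 : (MvPolynomial.X a - MvPolynomial.C (x a) : MvPolynomial σ ℂ) ∈
          (comap φ q).asIdeal := by
        rw [hqx, mem_pointToPoint]; simp
      have h2 := hy _ h1
      simpa [hφ, sub_eq_zero] using h2
    · simp only [ConstructibleSetData.toSet, Set.mem_iUnion]
      refine ⟨B, hB, ?_, ?_⟩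
      · rw [mem_zeroLocus, Set.range_subset_iff]
        intro j
        exact (mem_pointToPoint _ _).2 (by simpa [MvPolynomial.coe_aeval_eq_eval] using hy _ (hg j))
      · simpa [mem_zeroLocus, mem_pointToPoint, MvPolynomial.coe_aeval_eq_eval] using hfy

section Quantifiers

variable {σ τ : Type*} [Finite σ] [Finite τ]

lemma Constr.exists {S : (σ ⊕ τ → ℂ) → Prop} (hS : Constr S) :
    Constr (fun x : σ → ℂ => ∃ y : τ → ℂ, S (Sum.elim x y)) := by
  refine (hS.proj Sum.inl).congr fun x => ⟨?_, ?_⟩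
  · rintro ⟨y, hy⟩
    exact ⟨_, by simp, hy⟩
  · rintro ⟨z, rfl, hz⟩
    exact ⟨z ∘ Sum.inr, by rwa [Sum.elim_comp_inl_inr]⟩

lemma Constr.forall {S : (σ ⊕ τ → ℂ) → Prop} (hS : Constr S) :
    Constr (fun x : σ → ℂ => ∀ y : τ → ℂ, S (Sum.elim x y)) :=
  hS.not.exists.not.congr fun x => by simp

/-- Restriction of a polynomial to a vertical line, as a univariate polynomial. -/
noncomputable def lineP (x : σ → ℂ) : MvPolynomial (σ ⊕ Unit) ℂ →ₐ[ℂ] Polynomial ℂ :=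
  MvPolynomial.aeval (Sum.elim (fun a => Polynomial.C (x a)) fun _ => Polynomial.X)

omit [Finite σ] in
lemma eval_lineP (x : σ → ℂ) (t : ℂ) (p : MvPolynomial (σ ⊕ Unit) ℂ) :
    (lineP x p).eval t = MvPolynomial.eval (Sum.elim x fun _ => t) p := by
  induction p using MvPolynomial.induction_on with
  | C a => simp [lineP]
  | add p q hp hq => simp [hp, hq]
  | mul_X p a hp =>
    rw [map_mul, Polynomial.eval_mul, hp, map_mul]
    congr 1
    rcases a with a | a <;> simp [lineP]

/-- In a constructible family of subsets of the line, having an infinite fibre is a constructible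
condition: an infinite piece `{g = 0, f ≠ 0}` forces every `g` to vanish identically on the line. -/
lemma Constr.infinite_line {W : (σ ⊕ Unit → ℂ) → Prop} (hW : Constr W) :
    Constr (fun x : σ → ℂ => {t : ℂ | W (Sum.elim x fun _ => t)}.Infinite) := by
  obtain ⟨I, hI⟩ := hW.normalForm
  have hc : Constr (fun x : σ → ℂ => ∃ B : I,
      (∀ j, ∀ y : Unit → ℂ, MvPolynomial.eval (Sum.elim x y) (B.1.g j) = 0) ∧
      ∃ y : Unit → ℂ, ¬ MvPolynomial.eval (Sum.elim x y) B.1.f = 0) :=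
    Constr.ex fun B => (Constr.all fun j => (Constr.zero _).forall).and (Constr.zero _).not.exists
  refine hc.congr fun x => ⟨fun hinf => ?_, ?_⟩
  · by_contra hne
    push Not at hne
    refine hinf (Set.Finite.subset (Set.Finite.biUnion I.finite_toSet
      (t := fun B => {t : ℂ | (∀ j, MvPolynomial.eval (Sum.elim x fun _ => t) (B.g j) = 0) ∧
        MvPolynomial.eval (Sum.elim x fun _ => t) B.f ≠ 0}) fun B hB => ?_) fun t ht => ?_)
    · by_contra hBinf
      have hg : ∀ j, lineP x (B.g j) = 0 := fun j =>
        Polynomial.eq_zero_of_infinite_isRoot _ (Set.Infinite.mono (fun t ht => by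
          simpa [Polynomial.IsRoot, eval_lineP] using ht.1 j) hBinf)
      obtain ⟨t, ht⟩ := Set.Infinite.nonempty hBinf
      refine ht.2 (hne ⟨B, hB⟩ (fun j y => ?_) _)
      have := eval_lineP x (y ()) (B.g j)
      rw [hg j, Polynomial.eval_zero] at this
      exact this.symm
    · obtain ⟨B, hB, h⟩ := (hI _).1 ht
      exact Set.mem_biUnion hB h
  · rintro ⟨B, hg, y, hy⟩
    have hne : lineP x B.1.f ≠ 0 := by
      intro h0
      have := eval_lineP x (y ()) B.1.f
      rw [h0, Polynomial.eval_zero] at this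
      exact hy this.symm
    refine Set.Infinite.mono (s := {t : ℂ | (lineP x B.1.f).IsRoot t}ᶜ) (fun t ht => ?_)
      (Polynomial.finite_setOfPred_isRoot hne).infinite_compl
    refine (hI _).2 ⟨B.1, B.2, fun j => hg j _, ?_⟩
    simpa [Polynomial.IsRoot, eval_lineP] using ht

/-- A fibre in `τ → ℂ` is infinite exactly when one of its coordinate projections is. -/
lemma Constr.infinite {Z : (σ ⊕ τ → ℂ) → Prop} (hZ : Constr Z) :
    Constr (fun x : σ → ℂ => {y : τ → ℂ | Z (Sum.elim x y)}.Infinite) := by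
  have hW : ∀ a : τ, Constr (fun w : σ ⊕ Unit → ℂ =>
      ∃ y : τ → ℂ, Z (Sum.elim (w ∘ Sum.inl) y) ∧ y a = w (Sum.inr ())) := by
    intro a
    have h1 := hZ.subst (τ := (σ ⊕ Unit) ⊕ τ) (Sum.elim (Sum.inl ∘ Sum.inl) Sum.inr)
    have h2 : Constr (fun z : (σ ⊕ Unit) ⊕ τ → ℂ => z (Sum.inr a) = z (Sum.inl (Sum.inr ()))) :=
      (Constr.zero (MvPolynomial.X (Sum.inr a) - MvPolynomial.X (Sum.inl (Sum.inr ())))).congr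
        fun z => by simp [sub_eq_zero]
    refine (h1.and h2).exists.congr fun w => exists_congr fun y => and_congr ?_ Iff.rfl
    refine iff_of_eq (congrArg Z ?_)
    funext b
    rcases b with b | b <;> rfl
  refine (Constr.ex fun a => (hW a).infinite_line).congr fun x => ?_
  rw [← not_iff_not]
  simp only [not_exists, Set.not_infinite, Sum.elim_comp_inl, Sum.elim_inr]
  refine ⟨fun h a => (h.image (fun y : τ → ℂ => y a)).subset ?_, fun h => ?_⟩
  · rintro t ⟨y, hy, rfl⟩
    exact ⟨y, hy, rfl⟩
  · exact (Set.Finite.pi' h).subset fun y hy a => ⟨y, hy, rfl⟩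

/-- Having at least `d` points in the fibre is constructible: it says that `d` pairwise distinct
points of the fibre exist. -/
lemma Constr.le_encard {Z : (σ ⊕ τ → ℂ) → Prop} (hZ : Constr Z) (d : ℕ) :
    Constr (fun x : σ → ℂ => (d : ℕ∞) ≤ {y : τ → ℂ | Z (Sum.elim x y)}.encard) := by
  have h1 : ∀ j : Fin d, Constr (fun z : σ ⊕ (Fin d × τ) → ℂ =>
      Z (Sum.elim (z ∘ Sum.inl) fun a => z (Sum.inr (j, a)))) := fun j =>
    (hZ.subst (τ := σ ⊕ (Fin d × τ)) (Sum.elim Sum.inl fun a => Sum.inr (j, a))).congr fun z => by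
      refine iff_of_eq (congrArg Z ?_)
      funext b
      rcases b with b | b <;> rfl
  have h2 : ∀ j l : Fin d, Constr (fun z : σ ⊕ (Fin d × τ) → ℂ =>
      (∀ a, z (Sum.inr (j, a)) = z (Sum.inr (l, a))) → j = l) := fun j l =>
    Constr.imp (Constr.all fun a => (Constr.zero (MvPolynomial.X (Sum.inr (j, a)) -
      MvPolynomial.X (Sum.inr (l, a)))).congr fun z => by simp [sub_eq_zero]) (Constr.const _)
  refine ((Constr.all h1).and (Constr.all fun j => Constr.all (h2 j))).exists.congr fun x => ?_
  simp only [Sum.elim_comp_inl, Sum.elim_inr]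
  constructor
  · intro h
    obtain ⟨t, hts, ht⟩ := Set.exists_subset_encard_eq h
    have htf : t.Finite := Set.finite_of_encard_eq_coe ht
    have hcard : Nat.card t = d := by
      rw [Nat.card_coe_set_eq, Set.ncard, ht]; rfl
    have : Finite t := htf
    let q := (Finite.equivFinOfCardEq hcard).symm
    refine ⟨fun p => (q p.1).1 p.2, fun j => hts (q j).2, fun j l hjl => ?_⟩
    exact q.injective (Subtype.ext (funext hjl))
  · rintro ⟨y, hy, hinj⟩
    have hi : Function.Injective (fun (j : Fin d) (a : τ) => y (j, a)) :=
      fun j l h => hinj j l fun a => congrFun h a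
    calc (d : ℕ∞) = (Set.range (fun (j : Fin d) (a : τ) => y (j, a))).encard := by
          rw [← Set.image_univ, hi.encard_image, Set.encard_univ]; simp
      _ ≤ _ := Set.encard_le_encard (by rintro _ ⟨j, rfl⟩; exact hy j)

end Quantifiers

/-! ### Generic behaviour of constructible predicates -/

section Generic

variable {σ τ : Type*}

/-- Generic decidedness: on a nonempty principal open set a constructible predicate is either
identically true or identically false. -/
lemma Constr.decided {S : (σ → ℂ) → Prop} (hS : Constr S) :
    ∃ g : MvPolynomial σ ℂ, g ≠ 0 ∧ ((∀ x, MvPolynomial.eval x g ≠ 0 → S x) ∨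
      ∀ x, MvPolynomial.eval x g ≠ 0 → ¬ S x) := by
  obtain ⟨I, hI⟩ := hS.normalForm
  by_cases h : ∃ B ∈ I, (∀ j, B.g j = 0) ∧ B.f ≠ 0
  · obtain ⟨B, hB, hg, hf⟩ := h
    exact ⟨B.f, hf, Or.inl fun x hx => (hI x).2 ⟨B, hB, fun j => by simp [hg], hx⟩⟩
  · have h' : ∀ B : I, ∃ q : MvPolynomial σ ℂ, q ≠ 0 ∧ ∀ x, MvPolynomial.eval x q ≠ 0 →
        ¬ ((∀ j, MvPolynomial.eval x (B.1.g j) = 0) ∧ MvPolynomial.eval x B.1.f ≠ 0) := by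
      intro B
      by_cases hg : ∀ j, B.1.g j = 0
      · have hf : B.1.f = 0 := by
          by_contra hf
          exact h ⟨B.1, B.2, hg, hf⟩
        exact ⟨1, one_ne_zero, fun x _ => by simp [hf]⟩
      · push Not at hg
        obtain ⟨j, hj⟩ := hg
        exact ⟨_, hj, fun x hx h => hx (h.1 j)⟩
    choose q hq hqx using h'
    refine ⟨∏ B, q B, Finset.prod_ne_zero_iff.2 fun B _ => hq B, Or.inr fun x hx hSx => ?_⟩
    obtain ⟨B, hB, hBx⟩ := (hI x).1 hSx
    rw [map_prod, Finset.prod_ne_zero_iff] at hx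
    exact hqx ⟨B, hB⟩ x (hx _ (Finset.mem_univ _)) hBx

lemma isOpen_nonvanishing [Finite σ] (g : MvPolynomial σ ℂ) :
    IsOpen {x : σ → ℂ | MvPolynomial.eval x g ≠ 0} :=
  isOpen_ne_fun (MvPolynomial.continuous_eval g) continuous_const

/-- A polynomial vanishing on a ball is zero, since a ball is a product of infinite sets. -/
lemma dense_nonvanishing [Finite σ] {g : MvPolynomial σ ℂ} (hg : g ≠ 0) :
    Dense {x : σ → ℂ | MvPolynomial.eval x g ≠ 0} := by
  have := Fintype.ofFinite σ
  rw [Metric.dense_iff]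
  intro x r hr
  by_contra hne
  refine hg (MvPolynomial.funext_set (fun a => Metric.ball (x a) r)
    (fun a => infinite_of_mem_nhds (x a) (Metric.ball_mem_nhds _ hr)) fun y hy => ?_)
  rw [map_zero]
  by_contra h0
  refine hne ⟨y, ?_, h0⟩
  rw [ball_pi _ hr]
  exact hy

end Generic

section GenericTransfer

lemma generic_homeo {α β : Type*} [TopologicalSpace α] [TopologicalSpace β] (h : α ≃ₜ β)
    (P : β → Prop) : Generic (fun a => P (h a)) ↔ Generic P := by
  constructor
  · rintro ⟨U, hU, hd, hP⟩
    refine ⟨h '' U, h.isOpenMap _ hU, h.surjective.denseRange.dense_image h.continuous hd, ?_⟩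
    rintro _ ⟨a, ha, rfl⟩
    exact hP a ha
  · rintro ⟨U, hU, hd, hP⟩
    exact ⟨h ⁻¹' U, hU.preimage h.continuous, hd.preimage h.isOpenMap, fun a ha => hP _ ha⟩

lemma _root_.MultiProj.Generic.mono {α : Type*} [TopologicalSpace α] {P Q : α → Prop} (h : Generic P)
    (hPQ : ∀ a, P a → Q a) : Generic Q := by
  obtain ⟨U, hU, hd, hP⟩ := h
  exact ⟨U, hU, hd, fun a ha => hPQ a (hP a ha)⟩

lemma _root_.MultiProj.Generic.and {α : Type*} [TopologicalSpace α] {P Q : α → Prop} (hP : Generic P)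
    (hQ : Generic Q) : Generic (fun a => P a ∧ Q a) := by
  obtain ⟨U, hU, hUd, hP⟩ := hP
  obtain ⟨V, hV, hVd, hQ⟩ := hQ
  exact ⟨U ∩ V, hU.inter hV, hUd.inter_of_isOpen_left hVd hU, fun a ha => ⟨hP a ha.1, hQ a ha.2⟩⟩

lemma _root_.MultiProj.Generic.all {α : Type*} [TopologicalSpace α] {κ : Type*} [Finite κ] {P : κ → α → Prop}
    (hP : ∀ k, Generic (P k)) : Generic (fun a => ∀ k, P k a) := by
  classical
  have := Fintype.ofFinite κ
  suffices h : ∀ s : Finset κ, Generic (fun a => ∀ k ∈ s, P k a) from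
    (h Finset.univ).mono fun a ha k => ha k (Finset.mem_univ k)
  intro s
  induction s using Finset.induction_on with
  | empty => exact ⟨Set.univ, isOpen_univ, dense_univ, by simp⟩
  | insert k s _ ih => exact ((hP k).and ih).mono fun a ha => by simpa using ha

lemma _root_.MultiProj.Generic.exists {α : Type*} [TopologicalSpace α] [Nonempty α] {P : α → Prop}
    (hP : Generic P) : ∃ a, P a := by
  obtain ⟨U, -, hd, hP⟩ := hP
  obtain ⟨a, ha⟩ := hd.nonempty
  exact ⟨a, hP a ha⟩

lemma generic_nonvanishing {σ : Type*} [Finite σ] {g : MvPolynomial σ ℂ} (hg : g ≠ 0) :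
    Generic (fun x : σ → ℂ => MvPolynomial.eval x g ≠ 0) :=
  ⟨_, isOpen_nonvanishing g, dense_nonvanishing hg, fun _ h => h⟩

lemma eval_aeval_of {σ τ : Type*} (h : σ → MvPolynomial τ ℂ) (x : τ → ℂ) (y : σ → ℂ)
    (hy : ∀ a, MvPolynomial.eval x (h a) = y a) (g : MvPolynomial σ ℂ) :
    MvPolynomial.eval x (MvPolynomial.aeval h g) = MvPolynomial.eval y g := by
  induction g using MvPolynomial.induction_on with
  | C a => simp
  | add p q hp hq => rw [map_add, map_add, hp, hq, map_add]
  | mul_X p a hp => rw [map_mul, map_mul, hp, MvPolynomial.aeval_X, hy, map_mul, MvPolynomial.eval_X]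

/-- A Fubini principle: for a constructible predicate, genericity on the total space agrees with
genericity on a general fibre. If `g` decides the predicate and `g (x₀, c₀) ≠ 0`, the exceptional
parameters `c` are zeros of the nonzero polynomial `g (x₀, ·)`. -/
lemma Constr.generic_fibre {σ τ : Type*} [Finite σ] [Finite τ] {S : (σ ⊕ τ → ℂ) → Prop}
    (hS : Constr S) : Generic (fun c : τ → ℂ =>
      (Generic (fun x : σ → ℂ => S (Sum.elim x c)) ↔ Generic S)) := by
  obtain ⟨g, hg, hgS⟩ := hS.decided
  obtain ⟨z, hz⟩ : ∃ z, MvPolynomial.eval z g ≠ 0 := by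
    by_contra h
    push Not at h
    exact hg (MvPolynomial.funext fun z => by simpa using h z)
  let gr : MvPolynomial τ ℂ := MvPolynomial.aeval
    (Sum.elim (fun a => MvPolynomial.C (z (Sum.inl a))) MvPolynomial.X) g
  let gl (c : τ → ℂ) : MvPolynomial σ ℂ := MvPolynomial.aeval
    (Sum.elim MvPolynomial.X (fun a => MvPolynomial.C (c a))) g
  have hgr : ∀ c, MvPolynomial.eval c gr = MvPolynomial.eval (Sum.elim (z ∘ Sum.inl) c) g :=
    fun c => eval_aeval_of _ _ _ (by rintro (a | a) <;> simp) g
  have hgl : ∀ c x, MvPolynomial.eval x (gl c) = MvPolynomial.eval (Sum.elim x c) g :=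
    fun c x => eval_aeval_of _ _ _ (by rintro (a | a) <;> simp) g
  have hgr0 : gr ≠ 0 := by
    intro h0
    have := hgr (z ∘ Sum.inr)
    rw [h0, Sum.elim_comp_inl_inr, map_zero] at this
    exact hz this.symm
  refine (generic_nonvanishing hgr0).mono fun c hc => ?_
  have hgl0 : gl c ≠ 0 := by
    intro h0
    have := hgl c (z ∘ Sum.inl)
    rw [h0, map_zero, ← hgr] at this
    exact hc this.symm
  have h1 : Generic (fun x : σ → ℂ => MvPolynomial.eval (Sum.elim x c) g ≠ 0) :=
    (generic_nonvanishing hgl0).mono fun x hx => by rwa [hgl] at hx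
  have h2 := generic_nonvanishing hg
  rcases hgS with h | h
  · exact iff_of_true (h1.mono fun x hx => h _ hx) (h2.mono fun x hx => h _ hx)
  · refine iff_of_false (fun hG => ?_) (fun hG => ?_)
    · obtain ⟨x, hx, hx'⟩ := (h1.and hG).exists
      exact h _ hx hx'
    · obtain ⟨x, hx, hx'⟩ := (h2.and hG).exists
      exact h _ hx hx'

end GenericTransfer

/-! ### Representatives of points and equations of the multicone -/

section Cone

variable {ι : Type*} [Fintype ι] [DecidableEq ι] {n : ι → ℕ}

/-- `v` is a system of homogeneous representatives of the point `x`, with all coordinates of all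
factors collected in one vector. -/
def Rep (v : (k : ι) × Fin (n k + 1) → ℂ) (x : PStack n) : Prop :=
  ∀ k, ∃ hv : (fun a => v ⟨k, a⟩) ≠ 0, Projectivization.mk ℂ (fun a => v ⟨k, a⟩) hv = x k

/-- Normalized representatives: in each factor the first nonzero coordinate is `1`. -/
def IsNormalized (v : (k : ι) × Fin (n k + 1) → ℂ) : Prop :=
  ∀ k, ∃ a, v ⟨k, a⟩ = 1 ∧ ∀ b, b < a → v ⟨k, b⟩ = 0

lemma exists_normalized {m : ℕ} (p : Projectivization ℂ (Fin (m + 1) → ℂ)) :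
    ∃ w : Fin (m + 1) → ℂ, (∃ a, w a = 1 ∧ ∀ b, b < a → w b = 0) ∧
      ∃ hw : w ≠ 0, Projectivization.mk ℂ w hw = p := by
  classical
  have hne : ∃ a, p.rep a ≠ 0 := by
    by_contra h
    push Not at h
    exact p.rep_nonzero (funext h)
  obtain ⟨a, ha, hmin⟩ := WellFounded.has_min (wellFounded_lt (α := Fin (m + 1)))
    {a | p.rep a ≠ 0} hne
  have h0 : (p.rep a)⁻¹ • p.rep ≠ 0 := smul_ne_zero (inv_ne_zero ha) p.rep_nonzero
  refine ⟨(p.rep a)⁻¹ • p.rep, ⟨a, inv_mul_cancel₀ ha, fun b hb => ?_⟩, h0, ?_⟩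
  · have : p.rep b = 0 := by
      by_contra h
      exact hmin b h hb
    simp [this]
  · conv_rhs => rw [← p.mk_rep]
    rw [Projectivization.mk_eq_mk_iff']
    exact ⟨_, rfl⟩

lemma normalized_unique {m : ℕ} {w w' : Fin (m + 1) → ℂ}
    (h : ∃ a, w a = 1 ∧ ∀ b, b < a → w b = 0) (h' : ∃ a, w' a = 1 ∧ ∀ b, b < a → w' b = 0)
    (t : ℂ) (ht : t • w' = w) : w = w' := by
  obtain ⟨a, ha, hlt⟩ := h
  obtain ⟨a', ha', hlt'⟩ := h'
  have ht0 : t ≠ 0 := by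
    rintro rfl
    rw [← ht] at ha
    simp at ha
  have haa : a = a' := by
    rcases lt_trichotomy a a' with h | h | h
    · have := hlt' a h
      rw [← ht] at ha
      simp [this] at ha
    · exact h
    · have := hlt a' h
      rw [← ht] at this
      simp [ha', ht0] at this
  subst haa
  have : t = 1 := by
    rw [← ht] at ha
    simpa [ha'] using ha
  rw [← ht, this, one_smul]

omit [Fintype ι] [DecidableEq ι] in
lemma exists_normRep (x : PStack n) : ∃ v, IsNormalized v ∧ Rep v x := by
  choose w hw hw' using fun k => exists_normalized (x k)
  exact ⟨fun p => w p.1 p.2, hw, hw'⟩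

/-- The normalized representative of a point. -/
noncomputable def normRep (x : PStack n) : (k : ι) × Fin (n k + 1) → ℂ :=
  (exists_normRep x).choose

omit [Fintype ι] [DecidableEq ι] in
lemma Rep.smul {v v' : (k : ι) × Fin (n k + 1) → ℂ} {x : PStack n} (hv : Rep v x)
    (hv' : Rep v' x) : ∃ t : ι → ℂ, ∀ p, v' p = t p.1 * v p := by
  have : ∀ k, ∃ t : ℂ, t • (fun a => v ⟨k, a⟩) = fun a => v' ⟨k, a⟩ := by
    intro k
    obtain ⟨h, hk⟩ := hv k
    obtain ⟨h', hk'⟩ := hv' k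
    exact (Projectivization.mk_eq_mk_iff' ℂ _ _ h' h).1 (hk'.trans hk.symm)
  choose t ht using this
  exact ⟨t, fun p => (congrFun (ht p.1) p.2).symm⟩

omit [Fintype ι] [DecidableEq ι] in
lemma Rep.ext {v : (k : ι) × Fin (n k + 1) → ℂ} {x y : PStack n} (hx : Rep v x)
    (hy : Rep v y) : x = y := by
  funext k
  obtain ⟨_, h⟩ := hx k
  obtain ⟨_, h'⟩ := hy k
  exact h.symm.trans h'

omit [Fintype ι] [DecidableEq ι] in
lemma IsNormalized.eq_normRep {v : (k : ι) × Fin (n k + 1) → ℂ} {x : PStack n} (hn : IsNormalized v)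
    (hv : Rep v x) : v = normRep x := by
  obtain ⟨h1, h2⟩ := (exists_normRep x).choose_spec
  obtain ⟨t, ht⟩ := h2.smul hv
  funext p
  exact congrFun (normalized_unique (hn p.1) (h1 p.1) (t p.1)
    (funext fun a => (ht ⟨p.1, a⟩).symm)) p.2

omit [Fintype ι] [DecidableEq ι] in
lemma normRep_injective : Function.Injective (normRep (n := n)) := by
  intro x y h
  have hx := (exists_normRep x).choose_spec.2
  have hy := (exists_normRep y).choose_spec.2
  change Rep (normRep x) x at hx
  rw [h] at hx
  exact hx.ext hy

omit [Fintype ι] [DecidableEq ι] in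
lemma IsNormalized.exists_rep {v : (k : ι) × Fin (n k + 1) → ℂ} (hn : IsNormalized v) : ∃ x : PStack n, Rep v x := by
  have h : ∀ k, (fun a => v ⟨k, a⟩) ≠ 0 := by
    intro k h0
    obtain ⟨a, ha, -⟩ := hn k
    have := congrFun h0 a
    simp [ha] at this
  exact ⟨fun k => Projectivization.mk ℂ _ (h k), fun k => ⟨h k, rfl⟩⟩

/-- The vanishing ideal of the multicone over `X`, as a set of polynomials. -/
def coneEqs (X : Set (PStack n)) : Set (MvPolynomial ((k : ι) × Fin (n k + 1)) ℂ) :=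
  {g | ∀ v, (∃ x ∈ X, Rep v x) → MvPolynomial.eval v g = 0}

omit [Fintype ι] [DecidableEq ι] in
/-- Membership in an algebraic set is tested on a single representative by the vanishing ideal of
the multicone: rescaling the factors of a defining equation produces an element of this ideal. -/
lemma mem_iff_coneEqs {X : Set (PStack n)} (hX : IsAlgebraicSet X)
    {v : (k : ι) × Fin (n k + 1) → ℂ} {x : PStack n} (hv : Rep v x) :
    x ∈ X ↔ ∀ g ∈ coneEqs X, MvPolynomial.eval v g = 0 := by
  refine ⟨fun hx g hg => hg v ⟨x, hx, hv⟩, fun h => ?_⟩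
  obtain ⟨F, rfl⟩ := hX
  intro f hf v' hv'
  obtain ⟨t, ht⟩ := hv.smul (v' := fun p => v' p.1 p.2) hv'
  have ht0 : ∀ k, t k ≠ 0 := by
    intro k h0
    obtain ⟨h1, -⟩ := hv' k
    exact h1 (funext fun a => by simpa [h0] using ht ⟨k, a⟩)
  have hscale : ∀ u : (k : ι) × Fin (n k + 1) → ℂ, MvPolynomial.eval u (MvPolynomial.aeval
      (fun p => MvPolynomial.C (t p.1) * MvPolynomial.X p) f) =
      MvPolynomial.eval (fun p => t p.1 * u p) f :=
    fun u => eval_aeval_of _ _ _ (fun a => by simp) f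
  have := h (MvPolynomial.aeval (fun p => MvPolynomial.C (t p.1) * MvPolynomial.X p) f) ?_
  · rw [hscale] at this
    rw [← this]
    exact congrArg (fun u => MvPolynomial.eval u f) (funext ht)
  · rintro u ⟨y, hy, hu⟩
    rw [hscale]
    refine hy f hf (fun k a => t k * u ⟨k, a⟩) fun k => ?_
    obtain ⟨h1, h2⟩ := hu k
    have h3 : (fun a => t k * u ⟨k, a⟩) ≠ 0 := smul_ne_zero (ht0 k) h1
    refine ⟨h3, ?_⟩
    rw [← h2, Projectivization.mk_eq_mk_iff']
    exact ⟨t k, rfl⟩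

lemma pLinVanish_iff {κ : Type*} [Fintype κ] (c v : κ → ℂ) (hv : v ≠ 0) :
    PLinVanish c (Projectivization.mk ℂ v hv) ↔ ∑ a, c a * v a = 0 := by
  refine ⟨fun h => h v hv rfl, fun h w hw hwv => ?_⟩
  obtain ⟨t, rfl⟩ := (Projectivization.mk_eq_mk_iff' ℂ _ _ hw hv).1 hwv
  simp only [Pi.smul_apply, smul_eq_mul]
  have : ∀ a, c a * (t * v a) = t * (c a * v a) := fun a => by ring
  simp_rw [this, ← Finset.mul_sum, h, mul_zero]

end Cone

/-! ### Slices as constructible families -/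

section Slices

variable {ι : Type*} [Fintype ι] [DecidableEq ι] {n : ι → ℕ}

/-- Coefficients of a slice of type `e` together with those of one extra linear form `ℓ` in the
`i`-th group of variables. -/
abbrev Params (n : ι → ℕ) (i : ι) (e : ι → ℕ) :=
  ((k : ι) × (Fin (e k) × Fin (n k + 1))) ⊕ Fin (n i + 1) → ℂ

/-- The identification of the coefficients of a slice of type `e`, listed in one vector, with a slice. -/
def sliceHomeo (n e : ι → ℕ) :
    ((k : ι) × (Fin (e k) × Fin (n k + 1)) → ℂ) ≃ₜ SliceParams n e where
  toFun L := fun k j a => L ⟨k, j, a⟩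
  invFun L := fun q => L q.1 q.2.1 q.2.2
  left_inv _ := rfl
  right_inv _ := rfl
  continuous_toFun := by fun_prop
  continuous_invFun := by fun_prop

omit [Fintype ι] in
lemma lt_update (i : ι) (e : ι → ℕ) {k : ι} (j : Fin (e k)) :
    (j : ℕ) < Function.update e i (e i + 1) k := by
  rcases eq_or_ne k i with rfl | h
  · simp
  · simp [h]

omit [Fintype ι] in
lemma eq_of_not_lt {i : ι} {e : ι → ℕ} {k : ι} (j : Fin (Function.update e i (e i + 1) k))
    (h : ¬ (j : ℕ) < e k) : k = i := by
  by_contra hk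
  exact h (j.2.trans_eq (Function.update_of_ne hk _ _))

/-- A slice of type `e + ε_i` is a slice of type `e` together with one more form in the `i`-th
group of variables, put in the last position. -/
def splitHomeo (n : ι → ℕ) (i : ι) (e : ι → ℕ) :
    Params n i e ≃ₜ SliceParams n (Function.update e i (e i + 1)) where
  toFun p := fun k j a => if h : (j : ℕ) < e k then p (Sum.inl ⟨k, ⟨j, h⟩, a⟩) else
    p (Sum.inr (Fin.cast (by rw [eq_of_not_lt j h]) a))
  invFun L := Sum.elim (fun q => L q.1 ⟨q.2.1, lt_update i e q.2.1⟩ q.2.2)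
    (fun a => L i ⟨e i, by simp⟩ a)
  left_inv p := by
    funext q
    rcases q with ⟨k, j, a⟩ | a
    · simp
    · simp
  right_inv L := by
    funext k j a
    by_cases h : (j : ℕ) < e k
    · simp [h]
    · obtain rfl := eq_of_not_lt j h
      have hj : (j : ℕ) = e k := by
        have := j.2.trans_eq (Function.update_self _ _ _)
        omega
      simp only [h, dif_neg, not_false_eq_true, Sum.elim_inr]
      have : j = ⟨e k, by simp⟩ := Fin.ext hj
      exact congrArg (fun j' => L k j' a) this.symm
  continuous_toFun := by
    refine continuous_pi fun k => continuous_pi fun j => continuous_pi fun a => ?_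
    by_cases h : (j : ℕ) < e k
    · simp only [h, dif_pos]
      fun_prop
    · simp only [h, dif_neg, not_false_eq_true]
      fun_prop
  continuous_invFun := by
    refine continuous_pi fun q => ?_
    rcases q with q | a
    · simp only [Sum.elim_inl]
      fun_prop
    · simp only [Sum.elim_inr]
      fun_prop

omit [Fintype ι] in
lemma sliceZeros_split (i : ι) (e : ι → ℕ) (p : Params n i e) :
    SliceZeros (splitHomeo n i e p) =
      {x | PLinVanish (p ∘ Sum.inr) (x i)} ∩ SliceZeros (sliceHomeo n e (p ∘ Sum.inl)) := by
  have hl : ∀ k (j : Fin (Function.update e i (e i + 1) k)) (h : (j : ℕ) < e k),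
      splitHomeo n i e p k j = sliceHomeo n e (p ∘ Sum.inl) k ⟨j, h⟩ :=
    fun k j h => funext fun a => dif_pos h
  have hr : ∀ j : Fin (Function.update e i (e i + 1) i), ¬ (j : ℕ) < e i →
      splitHomeo n i e p i j = p ∘ Sum.inr :=
    fun j h => funext fun a => dif_neg h
  ext x
  constructor
  · intro hx
    refine ⟨?_, fun k j => ?_⟩
    · have := hx i ⟨e i, by simp⟩
      rwa [hr _ (lt_irrefl _)] at this
    · have := hx k ⟨j, lt_update i e j⟩
      rwa [hl k _ j.2] at this
  · rintro ⟨h1, h2⟩ k j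
    by_cases h : (j : ℕ) < e k
    · rw [hl k j h]
      exact h2 k ⟨j, h⟩
    · obtain rfl := eq_of_not_lt j h
      rw [hr j h]
      exact h1

/-- The points of the slice with parameters `p`. -/
def sliceOf (X : Set (PStack n)) (i : ι) (e : ι → ℕ) (p : Params n i e) : Set (PStack n) :=
  X ∩ SliceZeros (splitHomeo n i e p)

/-- The incidence relation between slice parameters and normalized representatives of points. -/
def Incidence (X : Set (PStack n)) (i : ι) (e : ι → ℕ)
    (z : (((k : ι) × (Fin (e k) × Fin (n k + 1))) ⊕ Fin (n i + 1)) ⊕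
      ((k : ι) × Fin (n k + 1)) → ℂ) : Prop :=
  IsNormalized (z ∘ Sum.inr) ∧ (∀ g ∈ coneEqs X, MvPolynomial.eval (z ∘ Sum.inr) g = 0) ∧
    (∑ a, z (Sum.inl (Sum.inr a)) * z (Sum.inr ⟨i, a⟩) = 0) ∧
    ∀ k, ∀ j : Fin (e k), ∑ a, z (Sum.inl (Sum.inl ⟨k, j, a⟩)) * z (Sum.inr ⟨k, a⟩) = 0

omit [DecidableEq ι] in
lemma constr_norm : Constr (IsNormalized (n := n)) := by
  refine Constr.all fun k => Constr.ex fun a => Constr.and ?_ (Constr.all fun b => ?_)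
  · exact (Constr.zero (MvPolynomial.X ⟨k, a⟩ - MvPolynomial.C 1)).congr fun v => by
      simp [sub_eq_zero]
  · exact (Constr.const _).imp
      ((Constr.zero (MvPolynomial.X ⟨k, b⟩)).congr fun v => by simp)

omit [DecidableEq ι] in
lemma constr_incidence (X : Set (PStack n)) (i : ι) (e : ι → ℕ) : Constr (Incidence X i e) := by
  refine (constr_norm.subst Sum.inr).and (((Constr.zeros _).subst Sum.inr).and
    (Constr.and ?_ (Constr.all fun k => Constr.all fun j => ?_)))
  · exact (Constr.zero (∑ a, MvPolynomial.X (Sum.inl (Sum.inr a)) *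
      MvPolynomial.X (Sum.inr ⟨i, a⟩))).congr fun v => by simp
  · exact (Constr.zero (∑ a, MvPolynomial.X (Sum.inl (Sum.inl ⟨k, j, a⟩)) *
      MvPolynomial.X (Sum.inr ⟨k, a⟩))).congr fun v => by simp

omit [Fintype ι] in
lemma mem_sliceOf_iff {X : Set (PStack n)} (hX : IsAlgebraicSet X) (i : ι) (e : ι → ℕ)
    (p : Params n i e) {v : (k : ι) × Fin (n k + 1) → ℂ} {x : PStack n} (hn : IsNormalized v)
    (hv : Rep v x) : x ∈ sliceOf X i e p ↔ Incidence X i e (Sum.elim p v) := by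
  have key : ∀ k (c : Fin (n k + 1) → ℂ), PLinVanish c (x k) ↔ ∑ a, c a * v ⟨k, a⟩ = 0 := by
    intro k c
    obtain ⟨h, hk⟩ := hv k
    rw [← hk, pLinVanish_iff]
  rw [sliceOf, sliceZeros_split, Set.mem_inter_iff, Set.mem_inter_iff, mem_iff_coneEqs hX hv,
    Set.mem_ofPred_eq, key]
  simp only [Incidence, SliceZeros, Set.mem_ofPred_eq, key, Sum.elim_comp_inr, hn, true_and]
  rfl

omit [Fintype ι] in
/-- Slices are in bijection with the fibres of the incidence relation. -/
lemma image_normRep {X : Set (PStack n)} (hX : IsAlgebraicSet X) (i : ι) (e : ι → ℕ)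
    (p : Params n i e) :
    normRep '' sliceOf X i e p = {v | Incidence X i e (Sum.elim p v)} := by
  ext v
  constructor
  · rintro ⟨x, hx, rfl⟩
    obtain ⟨h1, h2⟩ := (exists_normRep x).choose_spec
    exact (mem_sliceOf_iff hX i e p h1 h2).1 hx
  · intro h
    have hn : IsNormalized v := h.1
    obtain ⟨x, hx⟩ := hn.exists_rep
    exact ⟨x, (mem_sliceOf_iff hX i e p hn hx).2 h, (hn.eq_normRep hx).symm⟩

lemma constr_infinite {X : Set (PStack n)} (hX : IsAlgebraicSet X) (i : ι) (e : ι → ℕ) :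
    Constr (fun p : Params n i e => (sliceOf X i e p).Infinite) :=
  (constr_incidence X i e).infinite.congr fun p => by
    rw [← image_normRep hX, Set.infinite_image_iff normRep_injective.injOn]

lemma constr_le_encard {X : Set (PStack n)} (hX : IsAlgebraicSet X) (i : ι) (e : ι → ℕ) (d : ℕ) :
    Constr (fun p : Params n i e => (d : ℕ∞) ≤ (sliceOf X i e p).encard) :=
  ((constr_incidence X i e).le_encard d).congr fun p => by
    rw [← image_normRep hX, normRep_injective.encard_image]

lemma constr_finite_nonempty {X : Set (PStack n)} (hX : IsAlgebraicSet X) (i : ι) (e : ι → ℕ) :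
    Constr (fun p : Params n i e => (sliceOf X i e p).Finite ∧ (sliceOf X i e p).Nonempty) :=
  ((constr_infinite hX i e).not.and (constr_le_encard hX i e 1)).congr fun p => by
    rw [Set.not_infinite, Nat.cast_one, Set.one_le_encard_iff_nonempty]

lemma constr_finite_ncard {X : Set (PStack n)} (hX : IsAlgebraicSet X) (i : ι) (e : ι → ℕ)
    (d : ℕ) :
    Constr (fun p : Params n i e => (sliceOf X i e p).Finite ∧ (sliceOf X i e p).ncard = d) :=
  ((constr_infinite hX i e).not.and ((constr_le_encard hX i e d).and
    (constr_le_encard hX i e (d + 1)).not)).congr fun p => by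
    rw [Set.not_infinite]
    refine and_congr_right fun hf => ?_
    rw [← hf.cast_ncard_eq]
    norm_cast
    omega

omit [Fintype ι] in
/-- Genericity over slices of type `e + ε_i` of `X` is genericity over the split parameters. -/
lemma generic_split (X : Set (PStack n)) (i : ι) (e : ι → ℕ) (Q : Set (PStack n) → Prop) :
    Generic (fun p : Params n i e => Q (sliceOf X i e p)) ↔
      Generic (fun L : SliceParams n (Function.update e i (e i + 1)) => Q (X ∩ SliceZeros L)) :=
  generic_homeo (splitHomeo n i e) fun L => Q (X ∩ SliceZeros L)

omit [Fintype ι] in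
/-- Slicing `X ∩ V(c)` by a form vector of type `e` amounts to fixing the last form of a slice
of `X` of type `e + ε_i`. -/
lemma generic_fibre_iff (X : Set (PStack n)) (i : ι) (e : ι → ℕ) (c : Fin (n i + 1) → ℂ)
    (Q : Set (PStack n) → Prop) :
    Generic (fun L : (k : ι) × (Fin (e k) × Fin (n k + 1)) → ℂ =>
      Q (sliceOf X i e (Sum.elim L c))) ↔
      Generic (fun L : SliceParams n e => Q ((X ∩ {x | PLinVanish c (x i)}) ∩ SliceZeros L)) := by
  rw [← generic_homeo (sliceHomeo n e)]
  simp only [sliceOf, sliceZeros_split, Sum.elim_comp_inl, Sum.elim_comp_inr, Set.inter_assoc]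

omit [Fintype ι] [DecidableEq ι] in
/-- `n i + 1` general forms on the `i`-th factor have no common zero: the determinant of
the coefficient matrix is generically nonzero. -/
lemma not_generic_nonempty (X : Set (PStack n)) (i : ι) (e : ι → ℕ) (he : e i = n i + 1)
    (h : Generic (fun L : SliceParams n e => (X ∩ SliceZeros L).Nonempty)) : False := by
  obtain ⟨U, -, hd, hU⟩ := h
  let M (L : SliceParams n e) : Matrix (Fin (n i + 1)) (Fin (n i + 1)) ℂ :=
    Matrix.of fun a b => L i (Fin.cast he.symm a) b
  have hM : Continuous fun L => (M L).det := by
    refine Continuous.matrix_det (continuous_matrix fun a b => ?_)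
    simp only [M, Matrix.of_apply]
    fun_prop
  have hopen : IsOpen {L | (M L).det ≠ 0} := isOpen_ne_fun hM continuous_const
  have hone : ((fun k j b => if (j : ℕ) = b then 1 else 0) : SliceParams n e) ∈ {L | (M L).det ≠ 0} := by
    have : M (fun k j b => if (j : ℕ) = b then 1 else 0) = 1 := by
      ext a b
      simp [M, Matrix.one_apply, Fin.ext_iff]
    rw [Set.mem_ofPred_eq, this, Matrix.det_one]
    exact one_ne_zero
  obtain ⟨L, hL, hLU⟩ := hd.inter_open_nonempty _ hopen ⟨_, hone⟩
  obtain ⟨x, -, hx⟩ := hU L hLU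
  refine (x i).rep_nonzero (Matrix.eq_zero_of_mulVec_eq_zero hL (funext fun a => ?_))
  exact hx i (Fin.cast he.symm a) _ (x i).rep_nonzero (x i).mk_rep

end Slices

end SliceAux

open SliceAux
/-- Lemma 5.1(2). If the projection of an equidimensional
multiprojective variety `X` to the `i`-th factor has dimension at least `1`, then for
a general hyperplane slice `V(ℓ)` from the `i`-th factor,
`Dim(X ∩ V(ℓ)) = { e - ε_i : e ∈ Dim X, e i > 0 }` and
`Deg_{X ∩ V(ℓ)}(e - ε_i) = Deg_X(e)` for such `e`. -/
theorem slice_mdim_deg {ι : Type*} [Fintype ι] [DecidableEq ι]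
    {n : ι → ℕ} (X : Set (PStack n)) (hX : Equidimensional X)
    (i : ι) (hproj : 1 ≤ dimProj {i} X) :
    Generic (fun c : Fin (n i + 1) → ℂ =>
      MDim (X ∩ {x | PLinVanish c (x i)}) =
        {e' | ∃ e ∈ MDim X, 0 < e i ∧ e' = Function.update e i (e i - 1)} ∧
      ∀ e ∈ MDim X, 0 < e i → ∀ d : ℕ, DegIs X e d →
        DegIs (X ∩ {x | PLinVanish c (x i)}) (Function.update e i (e i - 1)) d) := by
  have hA : IsAlgebraicSet X := hX.1
  -- only the finitely many types `e ≤ n` matter, so finitely many generic conditions on `c` suffice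
  have hfin : Finite {e : ι → ℕ // ∀ k, e k ≤ n k} :=
    (Set.Finite.subset (Set.finite_Iic n) fun e he => he : {e : ι → ℕ | ∀ k, e k ≤ n k}.Finite)
  have h1 := Generic.all fun e : {e : ι → ℕ // ∀ k, e k ≤ n k} =>
    (constr_finite_nonempty hA i e.1).generic_fibre
  -- for each type at most one degree occurs, so again one condition on `c` per type is enough
  have h2 := Generic.all (P := fun (e : {e : ι → ℕ // ∀ k, e k ≤ n k}) (c : Fin (n i + 1) → ℂ) =>
      ∀ d, DegIs X (Function.update e.1 i (e.1 i + 1)) d →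
        DegIs (X ∩ {x | PLinVanish c (x i)}) e.1 d) (fun e => by
    by_cases hd : ∃ d, DegIs X (Function.update e.1 i (e.1 i + 1)) d
    · obtain ⟨d, hd⟩ := hd
      refine (constr_finite_ncard hA i e.1 d).generic_fibre.mono fun c hc d' hd' => ?_
      obtain ⟨L, hL, hL'⟩ := (Generic.and hd hd').exists
      obtain rfl : d = d' := hL.2.symm.trans hL'.2
      rw [generic_split X i e.1 (fun A => A.Finite ∧ A.ncard = d),
        generic_fibre_iff X i e.1 c (fun A => A.Finite ∧ A.ncard = d)] at hc
      exact hc.2 hd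
    · exact ⟨Set.univ, isOpen_univ, dense_univ, fun c _ d h => absurd ⟨d, h⟩ hd⟩)
  refine (h1.and h2).mono fun c hc => ?_
  obtain ⟨hc1, hc2⟩ := hc
  have hdown : ∀ e : ι → ℕ, 0 < e i → Function.update (Function.update e i (e i - 1)) i
      (Function.update e i (e i - 1) i + 1) = e := by
    intro e he
    rw [Function.update_self, Function.update_idem, Nat.sub_add_cancel he, Function.update_eq_self]
  have hle : ∀ e : ι → ℕ, (∀ k, e k ≤ n k) → ∀ k, Function.update e i (e i - 1) k ≤ n k := by
    intro e he k
    rcases eq_or_ne k i with rfl | hk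
    · rw [Function.update_self]
      exact (Nat.sub_le _ _).trans (he k)
    · rw [Function.update_of_ne hk]
      exact he k
  have hiff : ∀ e : ι → ℕ, (∀ k, e k ≤ n k) →
      (e ∈ MDim (X ∩ {x | PLinVanish c (x i)}) ↔
        Generic (fun L : SliceParams n (Function.update e i (e i + 1)) =>
          (X ∩ SliceZeros L).Finite ∧ (X ∩ SliceZeros L).Nonempty)) := by
    intro e he
    have := hc1 ⟨e, he⟩
    rw [generic_split X i e (fun A => A.Finite ∧ A.Nonempty),
      generic_fibre_iff X i e c (fun A => A.Finite ∧ A.Nonempty)] at this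
    rw [← this]
    exact ⟨fun h => h.2, fun h => ⟨he, h⟩⟩
  refine ⟨?_, fun e he hei d hd => ?_⟩
  · ext e'
    constructor
    · intro h
      have hG := (hiff e' h.1).1 h
      refine ⟨_, ⟨fun k => ?_, hG⟩, by simp, by simp⟩
      rcases eq_or_ne k i with rfl | hk
      · rw [Function.update_self]
        by_contra hlt
        have : e' k = n k := le_antisymm (h.1 k) (by omega)
        exact not_generic_nonempty X k _ (by simp [this]) (hG.mono fun L hL => hL.2)
      · rw [Function.update_of_ne hk]
        exact h.1 k
    · rintro ⟨e, he, hei, rfl⟩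
      rw [hiff _ (hle e he.1), hdown e hei]
      exact he.2
  · refine hc2 ⟨_, hle e he.1⟩ d ?_
    dsimp only
    rw [hdown e hei]
    exact hd
end
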